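/- Let −∞ < β < α < 0 and r > 0. For every τ ∈ V_{α,r} with associated extension F of its Laplace transform, and every ε > 0, there exists σ ∈ V_β, with analytic extension G of its Laplace transform to the half-plane Re s > β, such that sup_{x≥0}|τ'(x) − σ'(x)| + sup_{s∈R̄_{α,r}} |F(s) − G(s)| < ε. That is, V_β is dense in V_{α,r}. -/

import Mathlib

open Filter Set MeasureTheory

/-- The Laplace transform `L{f;s} = ∫_0^∞ f(x) e^{-sx} dx`. -/
noncomputable def Laplace (f : ℝ → ℂ) (s : ℂ) : ℂ :=
  ∫ x in Set.Ioi (0 : ℝ), f x * Complex.exp (-(s * (x : ℂ)))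

/-- The closed rectangle `R̄_{α,r} = {s : α ≤ Re s ≤ 1, |Im s| ≤ r}`. -/
def Rbar (α r : ℝ) : Set ℂ := {s : ℂ | α ≤ s.re ∧ s.re ≤ 1 ∧ |s.im| ≤ r}

/-- The open rectangle `R_{α,r} = {s : α < Re s < 1, |Im s| < r}`. -/
def Ropen (α r : ℝ) : Set ℂ := {s : ℂ | α < s.re ∧ s.re < 1 ∧ |s.im| < r}

/-!
Subtracting an element of `V_β` that matches the values of `τ` and `τ'` at `0`, we may extend `τ`
by zero to a `C¹` function on the line. The dilation `(1 + η) e^{-ηx} τ((1 + η)x)` has transform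
`F((s + η) / (1 + η))`; it decays exponentially, its transform is analytic beyond the left, upper
and lower sides of the rectangle, and it tends to `τ` in the norm of `V_{α,r}` as `η → 0`.
Convolving twice with `N e^{-Nx}`, which multiplies the transform by `N / (s + N)`, makes the
transform decay cubically along vertical lines.

For such a `τ`, Laplace inversion along a contour passing to the left of the rectangle writes
`(τ, τ', F)` as an integral of multiples of the vectors `(e^{wx}, w e^{wx}, 1 / (s - w))` with
`Re w < 0` and `w` outside the rectangle. These vectors depend holomorphically on `w` in a connected
region, so by the identity theorem they all lie in the closed span of those with `Re w < β`, and
finite combinations of the latter come from `V_β`. The third component of the integral is `F`, since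
being analytic and being the transform of the first component are closed conditions.
-/

/-! ### The Laplace transform -/

section Laplace

variable {f g f' : ℝ → ℂ} {s w c : ℂ} {C b : ℝ}

/-- Absolute convergence of the Laplace integral of `f` at `s`. -/
def LaplaceConvergent (f : ℝ → ℂ) (s : ℂ) : Prop :=
  IntegrableOn (fun x : ℝ => f x * Complex.exp (-(s * x))) (Ioi 0)

theorem LaplaceConvergent.const_mul (hf : LaplaceConvergent f s) (c : ℂ) :
    LaplaceConvergent (fun x => c * f x) s := by
  simp only [LaplaceConvergent, mul_assoc]
  exact Integrable.const_mul hf c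

theorem laplace_add (hf : LaplaceConvergent f s) (hg : LaplaceConvergent g s) :
    Laplace (fun x => f x + g x) s = Laplace f s + Laplace g s := by
  simpa only [Laplace, add_mul] using integral_add hf hg

theorem laplace_sub (hf : LaplaceConvergent f s) (hg : LaplaceConvergent g s) :
    Laplace (fun x => f x - g x) s = Laplace f s - Laplace g s := by
  simpa only [Laplace, sub_mul] using integral_sub hf hg

theorem laplace_const_mul : Laplace (fun x => c * f x) s = c * Laplace f s := by
  simp only [Laplace, mul_assoc, integral_const_mul]

theorem laplace_congr (h : ∀ x, 0 < x → f x = g x) : Laplace f s = Laplace g s :=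
  setIntegral_congr_fun measurableSet_Ioi fun x hx => by simp only [h x hx]

theorem norm_mul_cexp_neg_mul_le {z : ℂ} {x : ℝ} (hz : ‖z‖ ≤ C * Real.exp (b * x)) :
    ‖z * Complex.exp (-(s * x))‖ ≤ C * Real.exp ((b - s.re) * x) :=
  calc ‖z * Complex.exp (-(s * x))‖ = ‖z‖ * Real.exp (-(s.re * x)) := by
        simp [Complex.norm_exp]
    _ ≤ C * Real.exp (b * x) * Real.exp (-(s.re * x)) := by gcongr
    _ = C * Real.exp ((b - s.re) * x) := by rw [mul_assoc, ← Real.exp_add]; ring_nf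

theorem laplaceConvergent_of_norm_le (hf : ContinuousOn f (Ici 0))
    (hb : ∀ x, 0 ≤ x → ‖f x‖ ≤ C * Real.exp (b * x)) (hs : b < s.re) :
    LaplaceConvergent f s := by
  refine Integrable.mono' ((integrableOn_exp_mul_Ioi (sub_neg.2 hs) 0).const_mul C) ?_ ?_
  · exact ((hf.mono Ioi_subset_Ici_self).mul (by fun_prop)).aestronglyMeasurable measurableSet_Ioi
  · filter_upwards [ae_restrict_mem measurableSet_Ioi] with x hx
    exact norm_mul_cexp_neg_mul_le (hb x (le_of_lt hx))

theorem norm_laplace_le (hb : ∀ x, 0 ≤ x → ‖f x‖ ≤ C * Real.exp (b * x)) (hs : b < s.re) :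
    ‖Laplace f s‖ ≤ C / (s.re - b) := by
  have hneg : b - s.re < 0 := sub_neg.2 hs
  calc ‖Laplace f s‖ ≤ ∫ x in Ioi (0 : ℝ), C * Real.exp ((b - s.re) * x) := by
        refine norm_integral_le_of_norm_le ((integrableOn_exp_mul_Ioi hneg 0).const_mul C) ?_
        filter_upwards [ae_restrict_mem measurableSet_Ioi] with x hx
        exact norm_mul_cexp_neg_mul_le (hb x (le_of_lt hx))
    _ = C / (s.re - b) := by
        rw [integral_const_mul, integral_exp_mul_Ioi hneg, mul_zero, Real.exp_zero,
          ← neg_sub s.re b, neg_div_neg_eq, mul_one_div]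

theorem hasDerivAt_cexp_mul_ofReal (w : ℂ) (x : ℝ) :
    HasDerivAt (fun x : ℝ => Complex.exp (w * x)) (w * Complex.exp (w * x)) x := by
  simpa [mul_comm] using ((Complex.ofRealCLM.hasDerivAt (x := x)).const_mul w).cexp

theorem laplace_cexp (h : w.re < s.re) :
    Laplace (fun x => Complex.exp (w * x)) s = 1 / (s - w) := by
  have hre : (w - s).re < 0 := by simpa using h
  calc Laplace (fun x => Complex.exp (w * x)) s
      = ∫ x in Ioi (0 : ℝ), Complex.exp ((w - s) * x) := by
        simp only [Laplace, ← Complex.exp_add, ← neg_mul, ← add_mul, ← sub_eq_add_neg]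
    _ = 1 / (s - w) := by
        rw [integral_exp_mul_complex_Ioi hre, Complex.ofReal_zero, mul_zero, Complex.exp_zero,
          ← neg_sub s w, neg_div_neg_eq]

theorem laplace_deriv (hf : ContinuousOn f (Ici 0)) (hd : ∀ x, 0 < x → HasDerivAt f (f' x) x)
    (hf' : ContinuousOn f' (Ici 0)) (hb : ∀ x, 0 ≤ x → ‖f x‖ ≤ C * Real.exp (b * x))
    (hb' : ∀ x, 0 ≤ x → ‖f' x‖ ≤ C * Real.exp (b * x)) (hs : b < s.re) :
    Laplace f' s = s * Laplace f s - f 0 := by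
  have hconv := laplaceConvergent_of_norm_le hf hb hs
  have hconv' := laplaceConvergent_of_norm_le hf' hb' hs
  have hderiv : ∀ x ∈ Ioi (0 : ℝ), HasDerivAt (fun x : ℝ => f x * Complex.exp (-(s * x)))
      (f' x * Complex.exp (-(s * x)) - s * (f x * Complex.exp (-(s * x)))) x := fun x hx => by
    have hexp := hasDerivAt_cexp_mul_ofReal (-s) x
    simp only [neg_mul] at hexp
    exact ((hd x hx).mul hexp).congr_deriv (by ring)
  have hlim : Tendsto (fun x : ℝ => f x * Complex.exp (-(s * x))) atTop (nhds 0) := by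
    have hexp : Tendsto (fun x => C * Real.exp ((b - s.re) * x)) atTop (nhds 0) := by
      simpa using (Real.tendsto_exp_atBot.comp
        (tendsto_id.const_mul_atTop_of_neg (sub_neg.2 hs))).const_mul C
    refine squeeze_zero_norm' ?_ hexp
    filter_upwards [eventually_ge_atTop 0] with x hx
    exact norm_mul_cexp_neg_mul_le (hb x hx)
  have hcont : ContinuousWithinAt (fun x : ℝ => f x * Complex.exp (-(s * x))) (Ici 0) 0 :=
    (hf 0 self_mem_Ici).mul (by fun_prop)
  have hint := integral_Ioi_of_hasDerivAt_of_tendsto hcont hderiv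
    (Integrable.sub hconv' (Integrable.const_mul hconv s)) hlim
  rw [integral_sub hconv' (Integrable.const_mul hconv s), integral_const_mul] at hint
  simp only [Complex.ofReal_zero, mul_zero, neg_zero, Complex.exp_zero, mul_one] at hint
  simp only [Laplace]
  linear_combination hint

end Laplace

/-! ### The spaces `V_β` and `V_{α,r}` -/

/-- `f` is a `C¹` function on `[0, ∞)` whose derivative `f'` tends to zero at infinity. -/
structure HasVanishingDeriv (f f' : ℝ → ℂ) : Prop where
  hasDerivWithinAt : ∀ x ∈ Ici (0 : ℝ), HasDerivWithinAt f (f' x) (Ici 0) x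
  continuousOn_deriv : ContinuousOn f' (Ici 0)
  tendsto_deriv : Tendsto f' atTop (nhds 0)

/-- `σ` belongs to `V_β`, with derivative `σ'` and with `G` continuing its Laplace transform. -/
structure MemVHalfPlane (β : ℝ) (σ σ' : ℝ → ℂ) (G : ℂ → ℂ) : Prop
    extends HasVanishingDeriv σ σ' where
  differentiableOn : DifferentiableOn ℂ G {s : ℂ | β < s.re}
  eq_laplace : ∀ s : ℂ, 0 < s.re → G s = Laplace σ s

/-- `τ` belongs to `V_{α,r}`, with derivative `τ'` and with `F` continuing its Laplace
transform. -/
structure MemVRect (α r : ℝ) (τ τ' : ℝ → ℂ) (F : ℂ → ℂ) : Prop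
    extends HasVanishingDeriv τ τ' where
  differentiableOn : DifferentiableOn ℂ F (Ropen α r)
  continuousOn : ContinuousOn F (Rbar α r)
  eq_laplace : ∀ s ∈ Rbar α r, 0 < s.re → F s = Laplace τ s

namespace HasVanishingDeriv

variable {f f' g g' : ℝ → ℂ}

theorem continuousOn (h : HasVanishingDeriv f f') : ContinuousOn f (Ici 0) :=
  fun x hx => (h.hasDerivWithinAt x hx).continuousWithinAt

theorem add (hf : HasVanishingDeriv f f') (hg : HasVanishingDeriv g g') :
    HasVanishingDeriv (fun x => f x + g x) (fun x => f' x + g' x) where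
  hasDerivWithinAt x hx := (hf.hasDerivWithinAt x hx).add (hg.hasDerivWithinAt x hx)
  continuousOn_deriv := hf.continuousOn_deriv.add hg.continuousOn_deriv
  tendsto_deriv := by simpa using hf.tendsto_deriv.add hg.tendsto_deriv

theorem const_mul (hf : HasVanishingDeriv f f') (c : ℂ) :
    HasVanishingDeriv (fun x => c * f x) (fun x => c * f' x) where
  hasDerivWithinAt x hx := (hf.hasDerivWithinAt x hx).const_mul c
  continuousOn_deriv := hf.continuousOn_deriv.const_smul c
  tendsto_deriv := by simpa using hf.tendsto_deriv.const_mul c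

theorem exists_forall_ge_norm_deriv_le (h : HasVanishingDeriv f f') {δ : ℝ} (hδ : 0 < δ) :
    ∃ X, 0 ≤ X ∧ ∀ x, X ≤ x → ‖f' x‖ ≤ δ := by
  obtain ⟨X, hX⟩ := eventually_atTop.1
    ((tendsto_zero_iff_norm_tendsto_zero.1 h.tendsto_deriv).eventually_le_const hδ)
  exact ⟨max X 0, le_max_right _ _, fun x hx => hX x ((le_max_left _ _).trans hx)⟩

theorem exists_norm_deriv_le (h : HasVanishingDeriv f f') :
    ∃ M, 0 ≤ M ∧ ∀ x, 0 ≤ x → ‖f' x‖ ≤ M := by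
  obtain ⟨X, -, hX⟩ := h.exists_forall_ge_norm_deriv_le one_pos
  obtain ⟨M, hM⟩ := isCompact_Icc.exists_bound_of_continuousOn
    (h.continuousOn_deriv.mono (Icc_subset_Ici_self : Icc 0 X ⊆ Ici 0))
  refine ⟨max M 1, by positivity, fun x hx => ?_⟩
  rcases le_total x X with hxX | hXx
  · exact (hM x ⟨hx, hxX⟩).trans (le_max_left _ _)
  · exact (hX x hXx).trans (le_max_right _ _)

theorem exists_norm_le_add_mul (h : HasVanishingDeriv f f') {δ : ℝ} (hδ : 0 < δ) :
    ∃ C, 0 ≤ C ∧ ∀ x, 0 ≤ x → ‖f x‖ ≤ C + δ * x := by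
  obtain ⟨X, hX0, hX⟩ := h.exists_forall_ge_norm_deriv_le hδ
  obtain ⟨C, hC⟩ := isCompact_Icc.exists_bound_of_continuousOn
    (h.continuousOn.mono (Icc_subset_Ici_self : Icc 0 X ⊆ Ici 0))
  refine ⟨C, (norm_nonneg _).trans (hC 0 ⟨le_rfl, hX0⟩), fun x hx => ?_⟩
  have hδx : 0 ≤ δ * x := by positivity
  rcases le_total x X with hxX | hXx
  · linarith [hC x ⟨hx, hxX⟩]
  · have hsub : Ici X ⊆ Ici 0 := Ici_subset_Ici.2 hX0
    have hinc := Convex.norm_image_sub_le_of_norm_hasDerivWithin_le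
      (fun y hy => (h.hasDerivWithinAt y (hsub hy)).mono hsub) hX (convex_Ici X) self_mem_Ici hXx
    rw [Real.norm_of_nonneg (sub_nonneg.2 hXx)] at hinc
    nlinarith [norm_sub_norm_le (f x) (f X), hC X ⟨hX0, le_rfl⟩]

theorem exists_norm_le_exp (h : HasVanishingDeriv f f') {b : ℝ} (hb : 0 < b) :
    ∃ C, 0 ≤ C ∧ ∀ x, 0 ≤ x → ‖f x‖ ≤ C * Real.exp (b * x) := by
  obtain ⟨C, hC, hle⟩ := h.exists_norm_le_add_mul hb
  refine ⟨C + 1, by positivity, fun x hx => (hle x hx).trans ?_⟩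
  have hexp := Real.add_one_le_exp (b * x)
  nlinarith [mul_nonneg hC (mul_nonneg hb.le hx)]

theorem laplaceConvergent (h : HasVanishingDeriv f f') {s : ℂ} (hs : 0 < s.re) :
    LaplaceConvergent f s := by
  obtain ⟨C, -, hC⟩ := h.exists_norm_le_exp (half_pos hs)
  exact laplaceConvergent_of_norm_le h.continuousOn hC (half_lt_self hs)

end HasVanishingDeriv

namespace MemVHalfPlane

variable {β : ℝ} {σ σ' τ τ' : ℝ → ℂ} {G H : ℂ → ℂ}

theorem add (hσ : MemVHalfPlane β σ σ' G) (hτ : MemVHalfPlane β τ τ' H) :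
    MemVHalfPlane β (fun x => σ x + τ x) (fun x => σ' x + τ' x) (fun s => G s + H s) where
  toHasVanishingDeriv := hσ.toHasVanishingDeriv.add hτ.toHasVanishingDeriv
  differentiableOn := hσ.differentiableOn.add hτ.differentiableOn
  eq_laplace s hs := by
    rw [laplace_add (hσ.laplaceConvergent hs) (hτ.laplaceConvergent hs), hσ.eq_laplace s hs,
      hτ.eq_laplace s hs]

theorem const_mul (hσ : MemVHalfPlane β σ σ' G) (c : ℂ) :
    MemVHalfPlane β (fun x => c * σ x) (fun x => c * σ' x) (fun s => c * G s) where
  toHasVanishingDeriv := hσ.toHasVanishingDeriv.const_mul c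
  differentiableOn := hσ.differentiableOn.const_mul c
  eq_laplace s hs := by rw [laplace_const_mul, hσ.eq_laplace s hs]

theorem cexp {w : ℂ} (hw : w.re < β) (hβ : β < 0) :
    MemVHalfPlane β (fun x => Complex.exp (w * x)) (fun x => w * Complex.exp (w * x))
      (fun s => 1 / (s - w)) where
  hasDerivWithinAt x _ := (hasDerivAt_cexp_mul_ofReal w x).hasDerivWithinAt
  continuousOn_deriv := by fun_prop
  tendsto_deriv := by
    have hexp : Tendsto (fun x : ℝ => ‖w‖ * Real.exp (w.re * x)) atTop (nhds 0) := by
      simpa using (Real.tendsto_exp_atBot.comp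
        (tendsto_id.const_mul_atTop_of_neg (hw.trans hβ))).const_mul ‖w‖
    exact tendsto_zero_iff_norm_tendsto_zero.2 (by simpa [Complex.norm_exp] using hexp)
  differentiableOn s hs := by
    have hsw : s - w ≠ 0 := sub_ne_zero.2 fun h => (hw.trans hs).ne (congrArg Complex.re h.symm)
    exact ((differentiableAt_const 1).div (differentiableAt_id.sub_const w)
      hsw).differentiableWithinAt
  eq_laplace s hs := (laplace_cexp (by linarith)).symm

theorem memVRect {α r : ℝ} (hσ : MemVHalfPlane β σ σ' G) (hβ : β < α) :
    MemVRect α r σ σ' G where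
  toHasVanishingDeriv := hσ.toHasVanishingDeriv
  differentiableOn := hσ.differentiableOn.mono fun _ hs => hβ.trans hs.1
  continuousOn := hσ.differentiableOn.continuousOn.mono fun _ hs => hβ.trans_le hs.1
  eq_laplace s _ hs := hσ.eq_laplace s hs

theorem exists_eq_at_zero (hβ : β < 0) (a a' : ℂ) :
    ∃ σ σ' G, MemVHalfPlane β σ σ' G ∧ σ 0 = a ∧ σ' 0 = a' := by
  let w : ℂ := (β - 1 : ℝ)
  have hw : w.re = β - 1 := Complex.ofReal_re _
  have hw_one : (w - 1).re = β - 2 := by rw [Complex.sub_re, hw, Complex.one_re]; ring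
  refine ⟨_, _, _, ((cexp (w := w) (by linarith) hβ).const_mul (a' - (w - 1) * a)).add
    ((cexp (w := w - 1) (by linarith) hβ).const_mul (w * a - a')), ?_, ?_⟩
  · simp only [Complex.ofReal_zero, mul_zero, Complex.exp_zero]
    ring
  · simp only [Complex.ofReal_zero, mul_zero, Complex.exp_zero]
    ring

end MemVHalfPlane

theorem MemVRect.sub {α r : ℝ} {τ τ' σ σ' : ℝ → ℂ} {F G : ℂ → ℂ} (hτ : MemVRect α r τ τ' F)
    (hσ : MemVRect α r σ σ' G) :
    MemVRect α r (fun x => τ x - σ x) (fun x => τ' x - σ' x) (fun s => F s - G s) where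
  toHasVanishingDeriv := by
    simpa only [neg_one_mul, ← sub_eq_add_neg] using
      hτ.toHasVanishingDeriv.add (hσ.toHasVanishingDeriv.const_mul (-1))
  differentiableOn := hτ.differentiableOn.sub hσ.differentiableOn
  continuousOn := hτ.continuousOn.sub hσ.continuousOn
  eq_laplace s hs hs0 := by
    rw [laplace_sub (hτ.laplaceConvergent hs0) (hσ.laplaceConvergent hs0),
      hτ.eq_laplace s hs hs0, hσ.eq_laplace s hs hs0]

/-- Approximability of `φ` on `[0, ∞)` and of `F` on the closed rectangle by the derivatives and
the transforms of one and the same element of `V_β`. -/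
def VBetaApproximable (β α r : ℝ) (φ : ℝ → ℂ) (F : ℂ → ℂ) : Prop :=
  ∀ ε > 0, ∃ σ σ' G, MemVHalfPlane β σ σ' G ∧ (∀ x : ℝ, 0 ≤ x → ‖φ x - σ' x‖ ≤ ε) ∧
    ∀ s ∈ Rbar α r, ‖F s - G s‖ ≤ ε

namespace VBetaApproximable

variable {β α r : ℝ} {φ σ σ' : ℝ → ℂ} {F G : ℂ → ℂ}

theorem of_forall_exists_near
    (h : ∀ ε > 0, ∃ ψ H, VBetaApproximable β α r ψ H ∧ (∀ x : ℝ, 0 ≤ x → ‖φ x - ψ x‖ ≤ ε) ∧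
      ∀ s ∈ Rbar α r, ‖F s - H s‖ ≤ ε) :
    VBetaApproximable β α r φ F := fun ε hε => by
  obtain ⟨ψ, H, hψ, hφψ, hFH⟩ := h (ε / 2) (half_pos hε)
  obtain ⟨σ, σ', G, hσ, hψσ, hHG⟩ := hψ (ε / 2) (half_pos hε)
  refine ⟨σ, σ', G, hσ, fun x hx => ?_, fun s hs => ?_⟩
  · linarith [norm_sub_le_norm_sub_add_norm_sub (φ x) (ψ x) (σ' x), hφψ x hx, hψσ x hx]
  · linarith [norm_sub_le_norm_sub_add_norm_sub (F s) (H s) (G s), hFH s hs, hHG s hs]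

theorem of_sub (h : VBetaApproximable β α r (fun x => φ x - σ' x) (fun s => F s - G s))
    (hσ : MemVHalfPlane β σ σ' G) : VBetaApproximable β α r φ F := fun ε hε => by
  obtain ⟨ρ, ρ', H, hρ, hφ, hF⟩ := h ε hε
  refine ⟨_, _, _, hσ.add hρ, fun x hx => ?_, fun s hs => ?_⟩
  · simpa only [sub_sub] using hφ x hx
  · simpa only [sub_sub] using hF s hs

theorem congr {ψ : ℝ → ℂ} (h : VBetaApproximable β α r φ F) (hψ : ∀ x, 0 ≤ x → φ x = ψ x) :
    VBetaApproximable β α r ψ F := fun ε hε => by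
  obtain ⟨σ, σ', G, hσ, hφ, hF⟩ := h ε hε
  exact ⟨σ, σ', G, hσ, fun x hx => hψ x hx ▸ hφ x hx, hF⟩

end VBetaApproximable

theorem Rbar_eq_reProdIm (α r : ℝ) : Rbar α r = Icc α 1 ×ℂ Icc (-r) r := by
  ext s
  simp only [Rbar, mem_ofPred_eq, Complex.mem_reProdIm, mem_Icc, abs_le, and_assoc]

theorem isCompact_Rbar (α r : ℝ) : IsCompact (Rbar α r) :=
  Rbar_eq_reProdIm α r ▸ isCompact_Icc.reProdIm isCompact_Icc

/-! ### Functions vanishing on the negative half-line -/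

/-- `f` is a `C¹` function on the line with derivative `f'` that vanishes on `(-∞, 0]`. -/
structure CausalC1 (f f' : ℝ → ℂ) : Prop where
  hasDerivAt : ∀ x, HasDerivAt f (f' x) x
  continuous_deriv : Continuous f'
  eq_zero : ∀ x ≤ 0, f x = 0

namespace CausalC1

variable {f f' : ℝ → ℂ}

theorem continuous (h : CausalC1 f f') : Continuous f :=
  continuous_iff_continuousAt.2 fun x => (h.hasDerivAt x).continuousAt

theorem deriv_eq_zero (h : CausalC1 f f') {x : ℝ} (hx : x ≤ 0) : f' x = 0 := by
  have hzero : HasDerivWithinAt f 0 (Iic x) x :=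
    (hasDerivWithinAt_const x (Iic x) 0).congr (fun y hy => h.eq_zero y (hy.trans hx))
      (h.eq_zero x hx)
  exact (uniqueDiffOn_Iic x x self_mem_Iic).eq_deriv _ (h.hasDerivAt x).hasDerivWithinAt hzero

theorem hasVanishingDeriv (h : CausalC1 f f') (hlim : Tendsto f' atTop (nhds 0)) :
    HasVanishingDeriv f f' where
  hasDerivWithinAt x _ := (h.hasDerivAt x).hasDerivWithinAt
  continuousOn_deriv := h.continuous_deriv.continuousOn
  tendsto_deriv := hlim

end CausalC1

theorem HasVanishingDeriv.causalC1_max_zero {f f' : ℝ → ℂ} (h : HasVanishingDeriv f f')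
    (h0 : f 0 = 0) (h0' : f' 0 = 0) :
    CausalC1 (fun x => f (max x 0)) (fun x => f' (max x 0)) where
  hasDerivAt x := by
    have hright (hx : 0 ≤ x) : HasDerivWithinAt (fun y => f (max y 0)) (f' x) (Ici 0) x :=
      (h.hasDerivWithinAt x hx).congr (fun y hy => by rw [max_eq_left hy]) (by rw [max_eq_left hx])
    have hleft (hx : x ≤ 0) : HasDerivWithinAt (fun y => f (max y 0)) 0 (Iic 0) x :=
      (hasDerivWithinAt_const x (Iic 0) 0).congr (fun y hy => by rw [max_eq_right hy, h0])
        (by rw [max_eq_right hx, h0])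
    rcases lt_trichotomy x 0 with hx | rfl | hx
    · rw [max_eq_right hx.le, h0']
      exact (hleft hx.le).hasDerivAt (Iic_mem_nhds hx)
    · have hunion := (hleft le_rfl).union (h0' ▸ hright le_rfl)
      rw [Iic_union_Ici, hasDerivWithinAt_univ] at hunion
      rwa [max_self, h0']
    · rw [max_eq_left hx.le]
      exact (hright hx.le).hasDerivAt (Ici_mem_nhds hx)
  continuous_deriv :=
    h.continuousOn_deriv.comp_continuous (by fun_prop) fun _ => mem_Ici.2 (le_max_right _ _)
  eq_zero x hx := by rw [max_eq_right hx, h0]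

/-- An element `f` of `V_{α,r}` that is causal, decays together with its derivative like `e^{bx}`
for some `b < 0`, and whose transform `F` is analytic beyond the left, upper and lower sides of
`R̄_{α,r}`. -/
structure MemVRectExtended (α r α₁ r₁ b : ℝ) (f f' : ℝ → ℂ) (F : ℂ → ℂ) : Prop
    extends CausalC1 f f' where
  left_lt : α₁ < α
  lt_height : r < r₁
  rate_neg : b < 0
  exists_norm_le : ∃ C, ∀ x, 0 ≤ x →
    ‖f x‖ ≤ C * Real.exp (b * x) ∧ ‖f' x‖ ≤ C * Real.exp (b * x)
  differentiableOn : DifferentiableOn ℂ F (Ropen α₁ r₁)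
  continuousOn : ContinuousOn F (Rbar α r)
  eq_laplace : ∀ s : ℂ, b < s.re → s.re ≤ 1 → |s.im| < r₁ → F s = Laplace f s

namespace MemVRectExtended

variable {α r α₁ r₁ b : ℝ} {f f' : ℝ → ℂ} {F : ℂ → ℂ}

theorem exists_forall_norm_le_exp (h : MemVRectExtended α r α₁ r₁ b f f' F) :
    ∃ C, ∀ x, ‖f x‖ ≤ C * Real.exp (b * x) ∧ ‖f' x‖ ≤ C * Real.exp (b * x) := by
  obtain ⟨C, hC⟩ := h.exists_norm_le
  have hC0 : 0 ≤ C := by simpa using (norm_nonneg (f 0)).trans (hC 0 le_rfl).1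
  refine ⟨C, fun x => (le_total 0 x).elim (hC x) fun hx => ?_⟩
  rw [h.eq_zero x hx, h.toCausalC1.deriv_eq_zero hx, norm_zero, and_self]
  positivity

theorem exists_forall_norm_le (h : MemVRectExtended α r α₁ r₁ b f f' F) :
    ∃ M, ∀ x, ‖f x‖ ≤ M ∧ ‖f' x‖ ≤ M := by
  obtain ⟨C, hC⟩ := h.exists_norm_le
  have hC0 : 0 ≤ C := by simpa using (norm_nonneg (f 0)).trans (hC 0 le_rfl).1
  refine ⟨C, fun x => ?_⟩
  rcases le_total 0 x with hx | hx
  · have hexp : C * Real.exp (b * x) ≤ C := mul_le_of_le_one_right hC0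
      (Real.exp_le_one_iff.2 (mul_nonpos_of_nonpos_of_nonneg h.rate_neg.le hx))
    exact ⟨(hC x hx).1.trans hexp, (hC x hx).2.trans hexp⟩
  · rw [h.eq_zero x hx, h.toCausalC1.deriv_eq_zero hx, norm_zero, and_self]
    exact hC0

theorem tendsto_deriv (h : MemVRectExtended α r α₁ r₁ b f f' F) :
    Tendsto f' atTop (nhds 0) := by
  obtain ⟨C, hC⟩ := h.exists_norm_le
  have hexp : Tendsto (fun x => C * Real.exp (b * x)) atTop (nhds 0) := by
    simpa using (Real.tendsto_exp_atBot.comp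
      (tendsto_id.const_mul_atTop_of_neg h.rate_neg)).const_mul C
  refine squeeze_zero_norm' ?_ hexp
  filter_upwards [eventually_ge_atTop 0] with x hx
  exact (hC x hx).2

end MemVRectExtended

/-! ### Dilation -/

/-- The dilation `(1 + η) e^{-ηx} f((1 + η)x)`, which trades growth of `f` for decay. -/
noncomputable def dilate (η : ℝ) (f : ℝ → ℂ) (x : ℝ) : ℂ :=
  (1 + η : ℝ) * Complex.exp (-η * x) * f ((1 + η) * x)

/-- The homothety with centre `1` and ratio `(1 + η)⁻¹`, which is the effect of `dilate η` on
Laplace transforms. -/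
noncomputable def contractPoint (η : ℝ) (s : ℂ) : ℂ :=
  (s + η) / (1 + η : ℝ)

section Dilation

variable {α r η : ℝ} {f f' : ℝ → ℂ} {F : ℂ → ℂ} {s : ℂ}

theorem re_contractPoint : (contractPoint η s).re = (s.re + η) / (1 + η) := by
  rw [contractPoint, Complex.div_ofReal_re, Complex.add_re, Complex.ofReal_re]

theorem im_contractPoint : (contractPoint η s).im = s.im / (1 + η) := by
  rw [contractPoint, Complex.div_ofReal_im, Complex.add_im, Complex.ofReal_im, add_zero]

theorem continuous_contractPoint (η : ℝ) : Continuous (contractPoint η) := by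
  unfold contractPoint
  fun_prop

theorem differentiable_contractPoint (η : ℝ) : Differentiable ℂ (contractPoint η) := by
  unfold contractPoint
  fun_prop

theorem contractPoint_mem_Rbar (hα : α < 1) (hr : 0 < r) (hη : 0 < η) (hs : s ∈ Rbar α r) :
    contractPoint η s ∈ Rbar α r := by
  have hpos : 0 < 1 + η := by linarith
  obtain ⟨hleft, hright, him⟩ := hs
  refine ⟨?_, ?_, ?_⟩
  · rw [re_contractPoint, le_div_iff₀ hpos]
    nlinarith
  · rw [re_contractPoint, div_le_one hpos]
    linarith
  · rw [im_contractPoint, abs_div, abs_of_pos hpos, div_le_iff₀ hpos]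
    nlinarith

theorem contractPoint_mem_Ropen (hη : 0 < η)
    (hs : s ∈ Ropen (1 - (1 - α) * (1 + η)) (r * (1 + η))) : contractPoint η s ∈ Ropen α r := by
  have hpos : 0 < 1 + η := by linarith
  obtain ⟨hleft, hright, him⟩ := hs
  refine ⟨?_, ?_, ?_⟩
  · rw [re_contractPoint, lt_div_iff₀ hpos]
    linarith
  · rw [re_contractPoint, div_lt_one hpos]
    linarith
  · rwa [im_contractPoint, abs_div, abs_of_pos hpos, div_lt_iff₀ hpos]

theorem laplace_dilate (hη : 0 < η) : Laplace (dilate η f) s = Laplace f (contractPoint η s) := by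
  have hpos : 0 < 1 + η := by linarith
  have hne : ((1 + η : ℝ) : ℂ) ≠ 0 := Complex.ofReal_ne_zero.2 hpos.ne'
  have hchange := integral_comp_mul_left_Ioi
    (fun y : ℝ => f y * Complex.exp (-(contractPoint η s * y))) 0 hpos
  have hintegrand (x : ℝ) : dilate η f x * Complex.exp (-(s * x)) = ((1 + η : ℝ) : ℂ) *
      (f ((1 + η) * x) * Complex.exp (-(contractPoint η s * ((1 + η) * x : ℝ)))) := by
    have hexp : -(contractPoint η s * ((1 + η) * x : ℝ)) = -η * x + -(s * x) := by
      rw [Complex.ofReal_mul, contractPoint, div_mul_eq_mul_div, ← mul_assoc, mul_right_comm,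
        mul_div_cancel_right₀ _ hne]
      ring
    rw [dilate, hexp, Complex.exp_add]
    ring
  simp only [Laplace, hintegrand]
  rw [integral_const_mul, hchange, mul_zero, Complex.real_smul, Complex.ofReal_inv,
    mul_inv_cancel_left₀ hne]

theorem norm_dilate (hη : 0 < η) (x : ℝ) :
    ‖dilate η f x‖ = (1 + η) * Real.exp (-(η * x)) * ‖f ((1 + η) * x)‖ := by
  have hpos : 0 ≤ 1 + η := by linarith
  rw [dilate, norm_mul, norm_mul, Complex.norm_exp, Complex.norm_of_nonneg hpos]
  simp

theorem norm_dilate_le {C b x : ℝ} (hη : 0 < η) (hx : 0 ≤ x)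
    (hf : ∀ y, 0 ≤ y → ‖f y‖ ≤ C * Real.exp (b * y)) :
    ‖dilate η f x‖ ≤ (1 + η) * C * Real.exp (((1 + η) * b - η) * x) :=
  calc ‖dilate η f x‖ = (1 + η) * Real.exp (-(η * x)) * ‖f ((1 + η) * x)‖ := norm_dilate hη x
    _ ≤ (1 + η) * Real.exp (-(η * x)) * (C * Real.exp (b * ((1 + η) * x))) := by
        gcongr
        exact hf _ (by positivity)
    _ = (1 + η) * C * (Real.exp (-(η * x)) * Real.exp (b * ((1 + η) * x))) := by ring
    _ = (1 + η) * C * Real.exp (((1 + η) * b - η) * x) := by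
        rw [← Real.exp_add]
        ring_nf

/-- The derivative of `dilate η f`, for `f'` the derivative of `f`. -/
noncomputable def dilateDeriv (η : ℝ) (f f' : ℝ → ℂ) (x : ℝ) : ℂ :=
  (1 + η : ℝ) * dilate η f' x - η * dilate η f x

theorem causalC1_dilate (h : CausalC1 f f') (hη : 0 < η) :
    CausalC1 (dilate η f) (dilateDeriv η f f') where
  hasDerivAt x := by
    have hcomp : HasDerivAt (fun x => f ((1 + η) * x)) ((1 + η : ℝ) * f' ((1 + η) * x)) x := by
      simpa [Function.comp_def] using
        (h.hasDerivAt ((1 + η) * x)).scomp x ((hasDerivAt_id x).const_mul (1 + η))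
    refine (((hasDerivAt_cexp_mul_ofReal (-η) x).const_mul _).mul hcomp).congr_deriv ?_
    simp only [dilateDeriv, dilate]
    ring
  continuous_deriv := by
    have hf := h.continuous
    have hf' := h.continuous_deriv
    unfold dilateDeriv dilate
    fun_prop
  eq_zero x hx := by
    rw [dilate, h.eq_zero _ (by nlinarith), mul_zero]

theorem norm_dilateDeriv_le_add (hη : 0 < η) (x : ℝ) :
    ‖dilateDeriv η f f' x‖ ≤ (1 + η) * ‖dilate η f' x‖ + η * ‖dilate η f x‖ := by
  refine (norm_sub_le _ _).trans_eq ?_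
  rw [norm_mul, norm_mul, Complex.norm_of_nonneg (by linarith), Complex.norm_of_nonneg hη.le]

theorem norm_dilateDeriv_le {C b x : ℝ} (hη : 0 < η) (hx : 0 ≤ x)
    (hf : ∀ y, 0 ≤ y → ‖f y‖ ≤ C * Real.exp (b * y))
    (hf' : ∀ y, 0 ≤ y → ‖f' y‖ ≤ C * Real.exp (b * y)) :
    ‖dilateDeriv η f f' x‖ ≤
      (1 + 2 * η) * ((1 + η) * C) * Real.exp (((1 + η) * b - η) * x) := by
  have : 0 ≤ 1 + η := by linarith
  calc ‖dilateDeriv η f f' x‖ ≤ (1 + η) * ‖dilate η f' x‖ + η * ‖dilate η f x‖ :=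
        norm_dilateDeriv_le_add hη x
    _ ≤ (1 + η) * ((1 + η) * C * Real.exp (((1 + η) * b - η) * x)) +
        η * ((1 + η) * C * Real.exp (((1 + η) * b - η) * x)) := by
        gcongr
        · exact norm_dilate_le hη hx hf'
        · exact norm_dilate_le hη hx hf
    _ = _ := by ring

theorem HasVanishingDeriv.exists_norm_dilate_le (h : HasVanishingDeriv f f') (hη : 0 < η) :
    ∃ C, ∀ x, 0 ≤ x → ‖dilate η f x‖ ≤ C * Real.exp (-(η / 2) * x) ∧
      ‖dilateDeriv η f f' x‖ ≤ C * Real.exp (-(η / 2) * x) := by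
  have hpos : 0 < 1 + η := by linarith
  let b := η / 2 / (1 + η)
  have hrate : (1 + η) * b - η = -(η / 2) := by
    rw [mul_div_cancel₀ _ hpos.ne']
    ring
  obtain ⟨C, hC, hfC⟩ := h.exists_norm_le_exp (show 0 < b by positivity)
  obtain ⟨M, hM, hfM⟩ := h.exists_norm_deriv_le
  have hbound : ∀ y, 0 ≤ y → ‖f y‖ ≤ (C + M) * Real.exp (b * y) := fun y hy =>
    (hfC y hy).trans (by gcongr; linarith)
  have hbound' : ∀ y, 0 ≤ y → ‖f' y‖ ≤ (C + M) * Real.exp (b * y) := fun y hy =>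
    (hfM y hy).trans <| by
      nlinarith [Real.one_le_exp (show 0 ≤ b * y by positivity)]
  refine ⟨(1 + 2 * η) * ((1 + η) * (C + M)), fun x hx => ⟨?_, ?_⟩⟩
  · refine (norm_dilate_le hη hx hbound).trans ?_
    rw [hrate]
    gcongr
    · linarith
    · nlinarith
  · exact (norm_dilateDeriv_le hη hx hbound hbound').trans_eq (by rw [hrate])

theorem memVRectExtended_dilate (h : MemVRect α r f f' F) (hcausal : CausalC1 f f')
    (hr : 0 < r) (hη : 0 < η) (hηα : η / 2 ≤ -α) :
    MemVRectExtended α r (1 - (1 - α) * (1 + η)) (r * (1 + η)) (-(η / 2))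
      (dilate η f) (dilateDeriv η f f') (fun s => F (contractPoint η s)) where
  toCausalC1 := causalC1_dilate hcausal hη
  left_lt := by nlinarith
  lt_height := by nlinarith
  rate_neg := by linarith
  exists_norm_le := h.exists_norm_dilate_le hη
  differentiableOn := h.differentiableOn.comp (differentiable_contractPoint η).differentiableOn
    fun _ hs => contractPoint_mem_Ropen hη hs
  continuousOn := h.continuousOn.comp (continuous_contractPoint η).continuousOn
    fun _ hs => contractPoint_mem_Rbar (by linarith) hr hη hs
  eq_laplace s hre hre_one him := by
    have hpos : 0 < 1 + η := by linarith
    have hre_pos : 0 < (contractPoint η s).re := by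
      rw [re_contractPoint]
      exact div_pos (by linarith) hpos
    rw [laplace_dilate hη]
    refine h.eq_laplace _ ⟨by linarith, ?_, ?_⟩ hre_pos
    · rw [re_contractPoint, div_le_one hpos]
      linarith
    · rw [im_contractPoint, abs_div, abs_of_pos hpos, div_le_iff₀ hpos]
      exact him.le

end Dilation

section DilationApproximation

variable {α r : ℝ} {f f' : ℝ → ℂ} {F : ℂ → ℂ}

theorem eventually_norm_sub_contractPoint_le (hα : α < 1) (hr : 0 < r)
    (hF : ContinuousOn F (Rbar α r)) {ε : ℝ} (hε : 0 < ε) :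
    ∀ᶠ η in nhdsWithin 0 (Ioi 0), ∀ s ∈ Rbar α r, ‖F s - F (contractPoint η s)‖ ≤ ε := by
  obtain ⟨B, hB⟩ := (isCompact_Rbar α r).exists_bound_of_continuousOn continuousOn_id
  obtain ⟨κ, hκ, hunif⟩ := Metric.uniformContinuousOn_iff.1
    ((isCompact_Rbar α r).uniformContinuousOn_of_continuous hF) ε hε
  have hsmall : ∀ᶠ η in nhds (0 : ℝ), η * (B + 1) < κ :=
    ((continuous_mul_const (B + 1)).tendsto' 0 0 (zero_mul _)).eventually_lt_const hκ
  filter_upwards [nhdsWithin_le_nhds hsmall, self_mem_nhdsWithin] with η hηκ hη s hs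
  have hη : 0 < η := hη
  have hpos : 0 < 1 + η := by linarith
  have hne : ((1 + η : ℝ) : ℂ) ≠ 0 := Complex.ofReal_ne_zero.2 hpos.ne'
  have hdiff : s - contractPoint η s = η * (s - 1) / (1 + η : ℝ) := by
    rw [contractPoint, eq_div_iff hne, sub_mul, div_mul_cancel₀ _ hne]
    push_cast
    ring
  rw [← dist_eq_norm]
  refine (hunif s hs _ (contractPoint_mem_Rbar hα hr hη hs) ?_).le
  calc dist s (contractPoint η s) = η * ‖s - 1‖ / (1 + η) := by
        rw [dist_eq_norm, hdiff, norm_div, norm_mul, Complex.norm_of_nonneg hη.le,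
          Complex.norm_of_nonneg hpos.le]
    _ ≤ η * ‖s - 1‖ := div_le_self (by positivity) (by linarith)
    _ ≤ η * (B + 1) := by
        gcongr
        exact (norm_sub_le s 1).trans (by rw [norm_one]; gcongr; exact hB s hs)
    _ < κ := hηκ

theorem norm_dilateDeriv_le_of_tail {C δ X η x : ℝ} (hC : 0 ≤ C) (hδ : 0 ≤ δ) (hX : 0 ≤ X)
    (hf : ∀ y, 0 ≤ y → ‖f y‖ ≤ C + δ * y) (hf' : ∀ y, X ≤ y → ‖f' y‖ ≤ δ)
    (hη : 0 < η) (hη_one : η ≤ 1) (hx : X ≤ x) :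
    ‖dilateDeriv η f f' x‖ ≤ 8 * δ + 2 * η * C := by
  have : 0 ≤ 1 + η := by linarith
  have hηx : 0 ≤ η * x := mul_nonneg hη.le (hX.trans hx)
  have hXx : X ≤ (1 + η) * x := by nlinarith
  have hexp : Real.exp (-(η * x)) ≤ 1 := Real.exp_le_one_iff.2 (neg_nonpos.2 hηx)
  have hexp_mul : Real.exp (-(η * x)) * (η * x) ≤ 1 := by
    rw [Real.exp_neg, inv_mul_le_one₀ (Real.exp_pos _)]
    linarith [Real.add_one_le_exp (η * x)]
  have hfirst : (1 + η) * ‖dilate η f' x‖ ≤ 4 * δ :=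
    calc (1 + η) * ‖dilate η f' x‖
        = (1 + η) * ((1 + η) * Real.exp (-(η * x)) * ‖f' ((1 + η) * x)‖) := by
          rw [norm_dilate hη]
      _ ≤ (1 + 1) * ((1 + 1) * 1 * δ) := by
          gcongr
          exact hf' _ hXx
      _ = 4 * δ := by ring
  have hsecond : η * ‖dilate η f x‖ ≤ 4 * δ + 2 * η * C :=
    calc η * ‖dilate η f x‖ = η * ((1 + η) * Real.exp (-(η * x)) * ‖f ((1 + η) * x)‖) := by
          rw [norm_dilate hη]
      _ ≤ η * ((1 + 1) * Real.exp (-(η * x)) * (C + δ * ((1 + 1) * x))) := by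
          have hx0 : 0 ≤ x := hX.trans hx
          gcongr
          exact (hf _ (hX.trans hXx)).trans (by gcongr)
      _ = 2 * η * (Real.exp (-(η * x)) * C) + 4 * δ * (Real.exp (-(η * x)) * (η * x)) := by ring
      _ ≤ 2 * η * (1 * C) + 4 * δ * 1 := by gcongr
      _ = 4 * δ + 2 * η * C := by ring
  calc ‖dilateDeriv η f f' x‖ ≤ (1 + η) * ‖dilate η f' x‖ + η * ‖dilate η f x‖ :=
        norm_dilateDeriv_le_add hη x
    _ ≤ 8 * δ + 2 * η * C := by linarith

theorem eventually_norm_sub_dilateDeriv_le (h : CausalC1 f f')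
    (hlim : Tendsto f' atTop (nhds 0)) {ε : ℝ} (hε : 0 < ε) :
    ∀ᶠ η in nhdsWithin 0 (Ioi 0), ∀ x, 0 ≤ x → ‖f' x - dilateDeriv η f f' x‖ ≤ ε := by
  have hδ : 0 < ε / 18 := by positivity
  obtain ⟨C, hC, hfC⟩ := (h.hasVanishingDeriv hlim).exists_norm_le_add_mul hδ
  obtain ⟨X, hX, hfX⟩ := (h.hasVanishingDeriv hlim).exists_forall_ge_norm_deriv_le hδ
  have hcompact : ∀ᶠ η in nhds (0 : ℝ), ∀ x ∈ Icc 0 X, ‖f' x - dilateDeriv η f f' x‖ < ε := by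
    refine isCompact_Icc.eventually_forall_of_forall_eventually fun x _ => ?_
    have hcont : Continuous fun p : ℝ × ℝ => ‖f' p.2 - dilateDeriv p.1 f f' p.2‖ := by
      have hf := h.continuous
      have hf' := h.continuous_deriv
      unfold dilateDeriv dilate
      fun_prop
    exact (hcont.tendsto (0, x)).eventually_lt_const (by simpa [dilateDeriv, dilate] using hε)
  have hsmall : ∀ᶠ η in nhds (0 : ℝ), 2 * η * C < ε / 2 :=
    (Continuous.tendsto' (by fun_prop) 0 0 (by ring)).eventually_lt_const (half_pos hε)
  filter_upwards [nhdsWithin_le_nhds hcompact, nhdsWithin_le_nhds hsmall,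
    nhdsWithin_le_nhds (eventually_lt_nhds one_pos), self_mem_nhdsWithin] with η hη_compact hηC
    hη_one hη x hx
  rcases le_total x X with hxX | hXx
  · exact (hη_compact x ⟨hx, hxX⟩).le
  · have htail := norm_dilateDeriv_le_of_tail hC hδ.le hX hfC hfX hη hη_one.le hXx
    linarith [norm_sub_le (f' x) (dilateDeriv η f f' x), hfX x hXx]

theorem MemVRect.exists_memVRectExtended_near (h : MemVRect α r f f' F) (hcausal : CausalC1 f f')
    (hα : α < 0) (hr : 0 < r) {ε : ℝ} (hε : 0 < ε) :
    ∃ α₁ r₁ b g g' H, MemVRectExtended α r α₁ r₁ b g g' H ∧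
      (∀ x, 0 ≤ x → ‖f' x - g' x‖ ≤ ε) ∧ ∀ s ∈ Rbar α r, ‖F s - H s‖ ≤ ε := by
  have hsmall : ∀ᶠ η in nhds (0 : ℝ), η / 2 ≤ -α :=
    ((continuous_id.div_const 2).tendsto' 0 0 (zero_div _)).eventually_le_const (neg_pos.2 hα)
  obtain ⟨η, hFη, hfη, hηα, hη⟩ :=
    ((eventually_norm_sub_contractPoint_le (by linarith) hr h.continuousOn hε).and
      ((eventually_norm_sub_dilateDeriv_le hcausal h.tendsto_deriv hε).and
        ((hsmall.filter_mono nhdsWithin_le_nhds).and self_mem_nhdsWithin))).exists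
  exact ⟨_, _, _, _, _, _, memVRectExtended_dilate h hcausal hr hη hηα, hfη, hFη⟩

end DilationApproximation

/-! ### Exponential smoothing -/

/-- The average of `f` over the past of `x` with exponential weight of mean `1 / N`. It multiplies
Laplace transforms by `N / (s + N)`. -/
noncomputable def expSmooth (N : ℝ) (f : ℝ → ℂ) (x : ℝ) : ℂ :=
  ∫ y in Ioi (0 : ℝ), (Real.exp (-y) : ℂ) * f (x - y / N)

section Smoothing

variable {f f' : ℝ → ℂ} {C b M N : ℝ}

theorem integrableOn_exp_neg_mul_comp_sub (hf : Continuous f) (hM : ∀ x, ‖f x‖ ≤ M) (x : ℝ) :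
    IntegrableOn (fun y : ℝ => (Real.exp (-y) : ℂ) * f (x - y / N)) (Ioi 0) := by
  refine Integrable.mono' ((integrableOn_exp_neg_Ioi 0).mul_const M)
    (Continuous.aestronglyMeasurable (by fun_prop)) (.of_forall fun y => ?_)
  rw [norm_mul, Complex.norm_of_nonneg (Real.exp_nonneg _)]
  gcongr
  exact hM _

theorem hasDerivAt_expSmooth (hf : Continuous f) (hM : ∀ x, ‖f x‖ ≤ M)
    (hd : ∀ x, HasDerivAt f (f' x) x) (hf' : Continuous f') (hM' : ∀ x, ‖f' x‖ ≤ M) (x : ℝ) :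
    HasDerivAt (expSmooth N f) (expSmooth N f' x) x := by
  refine (hasDerivAt_integral_of_dominated_loc_of_deriv_le
    (F' := fun x y => (Real.exp (-y) : ℂ) * f' (x - y / N)) univ_mem
    (.of_forall fun x => (integrableOn_exp_neg_mul_comp_sub (N := N) hf hM x).aestronglyMeasurable)
    (integrableOn_exp_neg_mul_comp_sub (N := N) hf hM x)
    (integrableOn_exp_neg_mul_comp_sub hf' hM' x).aestronglyMeasurable
    (bound := fun y => Real.exp (-y) * M) (.of_forall fun y z _ => ?_)
    ((integrableOn_exp_neg_Ioi 0).mul_const M) (.of_forall fun y z _ => ?_)).2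
  · rw [norm_mul, Complex.norm_of_nonneg (Real.exp_nonneg _)]
    gcongr
    exact hM' _
  · exact ((hd _).comp_sub_const z (y / N)).const_mul _

theorem expSmooth_deriv (hN : N ≠ 0) (hf : Continuous f) (hM : ∀ x, ‖f x‖ ≤ M)
    (hd : ∀ x, HasDerivAt f (f' x) x) (hf' : Continuous f') (hM' : ∀ x, ‖f' x‖ ≤ M) (x : ℝ) :
    expSmooth N f' x = N * (f x - expSmooth N f x) := by
  have hint := integrableOn_exp_neg_mul_comp_sub (N := N) hf hM x
  have hneg : IntegrableOn (fun y => -((Real.exp (-y) : ℂ) * f (x - y / N))) (Ioi 0) := hint.neg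
  have hint' := (integrableOn_exp_neg_mul_comp_sub (N := N) hf' hM' x).const_mul (N⁻¹ : ℂ)
  have hderiv (y : ℝ) : HasDerivAt (fun y : ℝ => (Real.exp (-y) : ℂ) * f (x - y / N))
      (-((Real.exp (-y) : ℂ) * f (x - y / N)) -
        (N⁻¹ : ℂ) * ((Real.exp (-y) : ℂ) * f' (x - y / N))) y := by
    have hexp : HasDerivAt (fun y : ℝ => (Real.exp (-y) : ℂ)) (-(Real.exp (-y) : ℂ)) y := by
      simpa using (Real.hasDerivAt_exp (-y)).comp y (hasDerivAt_neg y) |>.ofReal_comp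
    have hcomp : HasDerivAt (fun y => f (x - y / N)) (-(N⁻¹ : ℂ) * f' (x - y / N)) y := by
      simpa [Function.comp_def] using
        (hd (x - y / N)).scomp y (((hasDerivAt_id y).div_const N).const_sub x)
    exact (hexp.mul hcomp).congr_deriv (by ring)
  have hlim : Tendsto (fun y : ℝ => (Real.exp (-y) : ℂ) * f (x - y / N)) atTop (nhds 0) := by
    refine squeeze_zero_norm (a := fun y => Real.exp (-y) * M) (fun y => ?_)
      (by simpa using Real.tendsto_exp_neg_atTop_nhds_zero.mul_const M)
    rw [norm_mul, Complex.norm_of_nonneg (Real.exp_nonneg _)]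
    gcongr
    exact hM _
  have hparts := integral_Ioi_of_hasDerivAt_of_tendsto' (a := 0) (fun y _ => hderiv y)
    (hneg.sub hint') hlim
  rw [integral_sub hneg hint', integral_neg, integral_const_mul] at hparts
  simp only [neg_zero, Real.exp_zero, Complex.ofReal_one, zero_div, sub_zero, one_mul,
    zero_sub] at hparts
  have hN : (N : ℂ) ≠ 0 := Complex.ofReal_ne_zero.2 hN
  simp only [expSmooth]
  linear_combination (-N : ℂ) * hparts -
    (∫ y in Ioi (0 : ℝ), (Real.exp (-y) : ℂ) * f' (x - y / N)) * mul_inv_cancel₀ hN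

theorem expSmooth_eq_zero (hN : 0 < N) (hf : ∀ x ≤ 0, f x = 0) {x : ℝ} (hx : x ≤ 0) :
    expSmooth N f x = 0 :=
  setIntegral_eq_zero_of_forall_eq_zero fun y hy => by
    rw [hf _ (by linarith [div_pos (mem_Ioi.1 hy) hN]), mul_zero]

theorem norm_expSmooth_le (hN : 0 < N) (hbN : -b < N)
    (hf : ∀ x, ‖f x‖ ≤ C * Real.exp (b * x)) (x : ℝ) :
    ‖expSmooth N f x‖ ≤ C / (1 + b / N) * Real.exp (b * x) := by
  have hrate : -(1 + b / N) < 0 := by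
    have hlt : -1 < b / N := by rwa [lt_div_iff₀ hN, neg_one_mul, neg_lt]
    linarith
  have hpoint (y : ℝ) : ‖(Real.exp (-y) : ℂ) * f (x - y / N)‖ ≤
      C * Real.exp (b * x) * Real.exp (-(1 + b / N) * y) :=
    calc ‖(Real.exp (-y) : ℂ) * f (x - y / N)‖ = Real.exp (-y) * ‖f (x - y / N)‖ := by
          rw [norm_mul, Complex.norm_of_nonneg (Real.exp_nonneg _)]
      _ ≤ Real.exp (-y) * (C * Real.exp (b * (x - y / N))) := by gcongr; exact hf _
      _ = C * Real.exp (b * x) * Real.exp (-(1 + b / N) * y) := by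
          rw [mul_left_comm, mul_assoc, ← Real.exp_add, ← Real.exp_add]
          ring_nf
  calc ‖expSmooth N f x‖
      ≤ ∫ y in Ioi (0 : ℝ), C * Real.exp (b * x) * Real.exp (-(1 + b / N) * y) :=
        norm_integral_le_of_norm_le ((integrableOn_exp_mul_Ioi hrate 0).const_mul _)
          (.of_forall hpoint)
    _ = C / (1 + b / N) * Real.exp (b * x) := by
        rw [integral_const_mul, integral_exp_mul_Ioi hrate, mul_zero, Real.exp_zero,
          neg_div_neg_eq]
        ring

theorem causalC1_expSmooth (h : CausalC1 f f') (hM : ∀ x, ‖f x‖ ≤ M ∧ ‖f' x‖ ≤ M)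
    (hN : 0 < N) : CausalC1 (expSmooth N f) (expSmooth N f') where
  hasDerivAt := hasDerivAt_expSmooth h.continuous (fun x => (hM x).1) h.hasDerivAt
    h.continuous_deriv fun x => (hM x).2
  continuous_deriv := by
    have hS := hasDerivAt_expSmooth (N := N) h.continuous (fun x => (hM x).1) h.hasDerivAt
      h.continuous_deriv fun x => (hM x).2
    have hSf : Continuous (expSmooth N f) :=
      continuous_iff_continuousAt.2 fun x => (hS x).continuousAt
    exact (continuous_const.mul (h.continuous.sub hSf)).congr fun x =>
      (expSmooth_deriv hN.ne' h.continuous (fun x => (hM x).1) h.hasDerivAt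
        h.continuous_deriv (fun x => (hM x).2) x).symm
  eq_zero _ := expSmooth_eq_zero hN h.eq_zero

end Smoothing

theorem CausalC1.laplace_deriv {f f' : ℝ → ℂ} {b C : ℝ} {s : ℂ} (h : CausalC1 f f')
    (hC : ∀ x, 0 ≤ x → ‖f x‖ ≤ C * Real.exp (b * x) ∧ ‖f' x‖ ≤ C * Real.exp (b * x))
    (hs : b < s.re) : Laplace f' s = s * Laplace f s := by
  simpa [h.eq_zero 0 le_rfl] using _root_.laplace_deriv h.continuous.continuousOn
    (fun x _ => h.hasDerivAt x) h.continuous_deriv.continuousOn (fun x hx => (hC x hx).1)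
    (fun x hx => (hC x hx).2) hs

theorem add_ofReal_ne_zero {s : ℂ} {N : ℝ} (hs : -N < s.re) : s + N ≠ 0 := fun h0 => by
  have hre : s.re + N = 0 := by simpa using congrArg Complex.re h0
  linarith

section SmoothingExtended

variable {α r α₁ r₁ b N : ℝ} {f f' : ℝ → ℂ} {F : ℂ → ℂ}

theorem laplace_expSmooth (h : MemVRectExtended α r α₁ r₁ b f f' F) (hN : -b < N) {s : ℂ}
    (hs : b < s.re) : Laplace (expSmooth N f) s = N / (s + N) * Laplace f s := by
  have hN0 : 0 < N := by linarith [h.rate_neg]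
  obtain ⟨C, hC⟩ := h.exists_forall_norm_le_exp
  obtain ⟨M, hM⟩ := h.exists_forall_norm_le
  have hS := causalC1_expSmooth h.toCausalC1 hM hN0
  have hSC := norm_expSmooth_le hN0 hN fun x => (hC x).1
  have hSC' := norm_expSmooth_le hN0 hN fun x => (hC x).2
  have hconv : LaplaceConvergent f s :=
    laplaceConvergent_of_norm_le h.continuous.continuousOn (fun x _ => (hC x).1) hs
  have hSconv : LaplaceConvergent (expSmooth N f) s :=
    laplaceConvergent_of_norm_le hS.continuous.continuousOn (fun x _ => hSC x) hs
  have hderiv : Laplace (expSmooth N f') s = s * Laplace (expSmooth N f) s :=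
    hS.laplace_deriv (fun x _ => ⟨hSC x, hSC' x⟩) hs
  have hode : Laplace (expSmooth N f') s = N * Laplace f s + -N * Laplace (expSmooth N f) s := by
    rw [← laplace_const_mul, ← laplace_const_mul,
      ← laplace_add (hconv.const_mul _) (hSconv.const_mul _)]
    refine laplace_congr fun x _ => ?_
    rw [expSmooth_deriv hN0.ne' h.continuous (fun x => (hM x).1) h.hasDerivAt h.continuous_deriv
      fun x => (hM x).2]
    ring
  rw [div_mul_eq_mul_div, eq_div_iff (add_ofReal_ne_zero (by linarith))]
  linear_combination hode - hderiv

theorem memVRectExtended_expSmooth (h : MemVRectExtended α r α₁ r₁ b f f' F) (hN : -b < N)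
    (hN' : -α₁ < N) :
    MemVRectExtended α r α₁ r₁ b (expSmooth N f) (expSmooth N f') (fun s => N / (s + N) * F s) := by
  have hN0 : 0 < N := by linarith [h.rate_neg]
  obtain ⟨C, hC⟩ := h.exists_forall_norm_le_exp
  obtain ⟨M, hM⟩ := h.exists_forall_norm_le
  have hne {s : ℂ} (hs : α₁ < s.re) : s + N ≠ 0 := add_ofReal_ne_zero (by linarith)
  exact
  { toCausalC1 := causalC1_expSmooth h.toCausalC1 hM hN0
    left_lt := h.left_lt
    lt_height := h.lt_height
    rate_neg := h.rate_neg
    exists_norm_le := ⟨_, fun x _ => ⟨norm_expSmooth_le hN0 hN (fun x => (hC x).1) x,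
      norm_expSmooth_le hN0 hN (fun x => (hC x).2) x⟩⟩
    differentiableOn := DifferentiableOn.mul
      ((differentiableOn_const _).div (by fun_prop) fun s hs => hne hs.1) h.differentiableOn
    continuousOn := ContinuousOn.mul (continuousOn_const.div (by fun_prop)
      fun s hs => hne (h.left_lt.trans_le hs.1)) h.continuousOn
    eq_laplace := fun s hs hs1 him => by
      rw [laplace_expSmooth h hN hs, h.eq_laplace s hs hs1 him] }

end SmoothingExtended

/-! ### Decay of transforms along vertical lines -/

/-- The Laplace transform of `f` is `O(|w|^{-k})` on the line `Re w = c`. -/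
def VerticalDecay (k : ℕ) (c : ℝ) (f : ℝ → ℂ) : Prop :=
  ∃ C, ∀ w : ℂ, w.re = c → ‖w‖ ^ k * ‖Laplace f w‖ ≤ C

section VerticalDecay

variable {α r α₁ r₁ b c N : ℝ} {f f' : ℝ → ℂ} {F : ℂ → ℂ} {k : ℕ}

theorem MemVRectExtended.laplace_deriv (h : MemVRectExtended α r α₁ r₁ b f f' F) {s : ℂ}
    (hs : b < s.re) : Laplace f' s = s * Laplace f s := by
  obtain ⟨C, hC⟩ := h.exists_norm_le
  exact h.toCausalC1.laplace_deriv hC hs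

theorem MemVRectExtended.verticalDecay_one (h : MemVRectExtended α r α₁ r₁ b f f' F)
    (hc : b < c) : VerticalDecay 1 c f := by
  obtain ⟨C, hC⟩ := h.exists_norm_le
  refine ⟨C / (c - b), fun w hw => ?_⟩
  have hw' : b < w.re := hc.trans_eq hw.symm
  rw [pow_one, ← norm_mul, ← h.laplace_deriv hw', ← hw]
  exact norm_laplace_le (fun x hx => (hC x hx).2) hw'

theorem VerticalDecay.expSmooth (hf : VerticalDecay k c f)
    (h : MemVRectExtended α r α₁ r₁ b f f' F) (hc : b < c) (hN : -b < N) :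
    VerticalDecay (k + 1) c (expSmooth N f) := by
  obtain ⟨C, hC⟩ := hf
  have hN0 : 0 < N := by linarith [h.rate_neg]
  have hpos : 0 < c + N := by linarith
  refine ⟨N * (1 + N / (c + N)) * C, fun w hw => ?_⟩
  have hge : c + N ≤ ‖w + N‖ := by simpa [hw] using Complex.re_le_norm (w + N)
  have hratio : ‖w / (w + N)‖ ≤ 1 + N / (c + N) := by
    have hsplit : w / (w + N) = 1 - N / (w + N) := by
      rw [eq_sub_iff_add_eq, ← add_div, div_self (norm_pos_iff.1 (hpos.trans_le hge))]
    calc ‖w / (w + N)‖ ≤ 1 + N / ‖w + N‖ := by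
          rw [hsplit]
          refine (norm_sub_le _ _).trans_eq ?_
          rw [norm_one, norm_div, Complex.norm_of_nonneg hN0.le]
      _ ≤ 1 + N / (c + N) := by gcongr
  calc ‖w‖ ^ (k + 1) * ‖Laplace (_root_.expSmooth N f) w‖
      = N * ‖w / (w + N)‖ * (‖w‖ ^ k * ‖Laplace f w‖) := by
        rw [laplace_expSmooth h hN (hc.trans_eq hw.symm), norm_mul, norm_div, norm_div,
          Complex.norm_of_nonneg hN0.le]
        ring
    _ ≤ N * (1 + N / (c + N)) * C := by
        gcongr
        exact hC w hw

end VerticalDecay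

section SmoothingApproximation

variable {α r α₁ r₁ b c ε M N : ℝ} {g f f' : ℝ → ℂ} {F : ℂ → ℂ} {k : ℕ}

theorem exists_forall_norm_sub_le_add_mul (hg : UniformContinuous g) (hM : ∀ x, ‖g x‖ ≤ M)
    (hε : 0 < ε) : ∃ K, ∀ x y, ‖g x - g y‖ ≤ ε + K * |x - y| := by
  obtain ⟨δ, hδ, hgδ⟩ := Metric.uniformContinuous_iff.1 hg ε hε
  have hM0 : 0 ≤ M := (norm_nonneg _).trans (hM 0)
  refine ⟨2 * M / δ, fun x y => ?_⟩
  rcases lt_or_ge |x - y| δ with hxy | hxy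
  · have hclose := (dist_eq_norm (g x) (g y) ▸ hgδ (Real.dist_eq x y ▸ hxy)).le
    exact hclose.trans (le_add_of_nonneg_right (by positivity))
  · calc ‖g x - g y‖ ≤ 2 * M := by linarith [norm_sub_le (g x) (g y), hM x, hM y]
      _ = 2 * M / δ * δ := (div_mul_cancel₀ _ hδ.ne').symm
      _ ≤ 2 * M / δ * |x - y| := by gcongr
      _ ≤ ε + 2 * M / δ * |x - y| := le_add_of_nonneg_left hε.le

theorem norm_sub_expSmooth_le {δ K : ℝ} (hg : Continuous g) (hM : ∀ x, ‖g x‖ ≤ M)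
    (hmod : ∀ x y, ‖g x - g y‖ ≤ δ + K * |x - y|) (hN : 0 < N) (x : ℝ) :
    ‖g x - expSmooth N g x‖ ≤ δ + K / N := by
  have hexp : IntegrableOn (fun y => Real.exp (-y)) (Ioi 0) := integrableOn_exp_neg_Ioi 0
  have hmean : IntegrableOn (fun y => Real.exp (-y) * y) (Ioi 0) := by
    simpa [show (2 : ℝ) - 1 = 1 by norm_num] using Real.GammaIntegral_convergent two_pos
  have hmean_eq : ∫ y in Ioi (0 : ℝ), Real.exp (-y) * y = 1 := by
    simpa [show (2 : ℝ) - 1 = 1 by norm_num] using (Real.Gamma_eq_integral two_pos).symm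
  have hpoint (y : ℝ) (hy : 0 < y) :
      ‖(Real.exp (-y) : ℂ) * g x - (Real.exp (-y) : ℂ) * g (x - y / N)‖ ≤
        δ * Real.exp (-y) + K / N * (Real.exp (-y) * y) := by
    rw [← mul_sub, norm_mul, Complex.norm_of_nonneg (Real.exp_nonneg _)]
    have hstep := hmod x (x - y / N)
    rw [sub_sub_cancel, abs_of_pos (div_pos hy hN)] at hstep
    calc Real.exp (-y) * ‖g x - g (x - y / N)‖ ≤ Real.exp (-y) * (δ + K * (y / N)) := by gcongr
      _ = δ * Real.exp (-y) + K / N * (Real.exp (-y) * y) := by ring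
  have hleft : IntegrableOn (fun y => (Real.exp (-y) : ℂ) * g x) (Ioi 0) := hexp.ofReal.mul_const _
  have hconst : ∫ y in Ioi (0 : ℝ), (Real.exp (-y) : ℂ) * g x = g x := by
    rw [integral_mul_const, integral_complex_ofReal, integral_exp_neg_Ioi_zero,
      Complex.ofReal_one, one_mul]
  calc ‖g x - expSmooth N g x‖
      = ‖∫ y in Ioi (0 : ℝ), ((Real.exp (-y) : ℂ) * g x -
          (Real.exp (-y) : ℂ) * g (x - y / N))‖ := by
        rw [integral_sub hleft (integrableOn_exp_neg_mul_comp_sub hg hM x),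
          hconst, expSmooth]
    _ ≤ ∫ y in Ioi (0 : ℝ), (δ * Real.exp (-y) + K / N * (Real.exp (-y) * y)) :=
        norm_integral_le_of_norm_le ((hexp.const_mul _).add (hmean.const_mul _)) <| by
          filter_upwards [ae_restrict_mem measurableSet_Ioi] with y hy using hpoint y hy
    _ = δ + K / N := by
        rw [integral_add (hexp.const_mul _) (hmean.const_mul _), integral_const_mul,
          integral_const_mul, hmean_eq, integral_exp_neg_Ioi_zero, mul_one, mul_one]

theorem eventually_norm_sub_expSmooth_le (hg : UniformContinuous g) (hM : ∀ x, ‖g x‖ ≤ M)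
    (hε : 0 < ε) : ∀ᶠ N in atTop, ∀ x, ‖g x - expSmooth N g x‖ ≤ ε := by
  obtain ⟨K, hmod⟩ := exists_forall_norm_sub_le_add_mul hg hM (half_pos hε)
  have hlim : Tendsto (fun N : ℝ => ε / 2 + K / N) atTop (nhds (ε / 2)) := by
    simpa using (tendsto_id.const_div_atTop K).const_add (ε / 2)
  filter_upwards [hlim.eventually_le_const (half_lt_self hε), eventually_gt_atTop 0] with N hNε hN x
  exact (norm_sub_expSmooth_le hg.continuous hM hmod hN x).trans hNε

theorem MemVRectExtended.uniformContinuous_deriv (h : MemVRectExtended α r α₁ r₁ b f f' F) :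
    UniformContinuous f' := by
  refine h.continuous_deriv.uniformContinuous_of_tendsto_cocompact (x := 0) ?_
  rw [cocompact_eq_atBot_atTop]
  refine Tendsto.sup (tendsto_const_nhds.congr' ?_) h.tendsto_deriv
  filter_upwards [eventually_le_atBot 0] with x hx using (h.toCausalC1.deriv_eq_zero hx).symm

theorem eventually_norm_sub_div_add_mul_le (hF : ContinuousOn F (Rbar α r)) (hε : 0 < ε) :
    ∀ᶠ N : ℝ in atTop, ∀ s ∈ Rbar α r, ‖F s - N / (s + N) * F s‖ ≤ ε := by
  obtain ⟨B, hB⟩ := (isCompact_Rbar α r).exists_bound_of_continuousOn (continuousOn_id.mul hF)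
  have hlim : Tendsto (fun N => B / (α + N)) atTop (nhds 0) :=
    (tendsto_atTop_add_const_left _ α tendsto_id).const_div_atTop B
  filter_upwards [hlim.eventually_le_const hε, eventually_gt_atTop (-α)] with N hNε hN s hs
  have hpos : 0 < α + N := by linarith
  have hge : α + N ≤ ‖s + N‖ := by
    have hre := Complex.re_le_norm (s + N)
    rw [Complex.add_re, Complex.ofReal_re] at hre
    linarith [hs.1]
  have hB0 : 0 ≤ B := (norm_nonneg _).trans (hB s hs)
  have hne : s + N ≠ 0 := norm_pos_iff.1 (hpos.trans_le hge)
  calc ‖F s - N / (s + N) * F s‖ = ‖s * F s‖ / ‖s + N‖ := by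
        rw [← norm_div]
        congr 1
        field_simp
        ring
    _ ≤ B / (α + N) := by
        gcongr
        exact hB s hs
    _ ≤ ε := hNε

theorem MemVRectExtended.exists_verticalDecay_succ_near
    (h : MemVRectExtended α r α₁ r₁ b f f' F) (hc : b < c) (hf : VerticalDecay k c f)
    (hε : 0 < ε) :
    ∃ g g' H, MemVRectExtended α r α₁ r₁ b g g' H ∧ VerticalDecay (k + 1) c g ∧
      (∀ x, ‖f' x - g' x‖ ≤ ε) ∧ ∀ s ∈ Rbar α r, ‖F s - H s‖ ≤ ε := by
  obtain ⟨M, hM⟩ := h.exists_forall_norm_le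
  obtain ⟨N, hNf, hNF, hNb, hNα⟩ :=
    ((eventually_norm_sub_expSmooth_le h.uniformContinuous_deriv (fun x => (hM x).2) hε).and
      ((eventually_norm_sub_div_add_mul_le h.continuousOn hε).and
        ((eventually_gt_atTop (-b)).and (eventually_gt_atTop (-α₁))))).exists
  exact ⟨_, _, _, memVRectExtended_expSmooth h hNb hNα, hf.expSmooth h hc hNb, hNf, hNF⟩

end SmoothingApproximation

/-! ### Laplace inversion -/

section Inversion

variable {f : ℝ → ℂ} {b c C : ℝ}

theorem integral_eq_integral_Ioi_of_eq_zero {E : Type*} [NormedAddCommGroup E] [NormedSpace ℝ E]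
    {g : ℝ → E} (hg : ∀ x ≤ 0, g x = 0) : ∫ x, g x = ∫ x in Ioi (0 : ℝ), g x :=
  (setIntegral_eq_integral_of_forall_compl_eq_zero fun x hx => hg x (not_lt.1 hx)).symm

open FourierTransform in
theorem fourier_mul_cexp_neg_mul (hf : ∀ x ≤ 0, f x = 0) (ξ : ℝ) :
    𝓕 (fun x : ℝ => f x * Complex.exp (-(c * x))) ξ =
      Laplace f (c + (2 * Real.pi * ξ : ℝ) * Complex.I) := by
  rw [Real.fourier_real_eq_integral_exp_smul,
    integral_eq_integral_Ioi_of_eq_zero fun x hx => by rw [hf x hx, zero_mul, smul_zero], Laplace]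
  congr 1 with y
  rw [smul_eq_mul, mul_left_comm, ← Complex.exp_add]
  congr 2
  push_cast
  ring

theorem integrable_mul_cexp_neg_mul (hfc : Continuous f) (hf : ∀ x ≤ 0, f x = 0)
    (hC : ∀ x, 0 ≤ x → ‖f x‖ ≤ C * Real.exp (b * x)) (hc : b < c) :
    Integrable fun x : ℝ => f x * Complex.exp (-(c * x)) := by
  refine (integrableOn_iff_integrable_of_support_subset (s := Ioi 0) fun x hx => ?_).1
    (laplaceConvergent_of_norm_le hfc.continuousOn hC (s := c) hc)
  by_contra hx0
  exact hx (by simp only [hf x (not_lt.1 hx0), zero_mul])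

open FourierTransform in
theorem integral_laplace_mul_cexp (hfc : Continuous f) (hf : ∀ x ≤ 0, f x = 0)
    (hC : ∀ x, 0 ≤ x → ‖f x‖ ≤ C * Real.exp (b * x)) (hc : b < c)
    (hint : Integrable fun t : ℝ => Laplace f (c + t * Complex.I)) (x : ℝ) :
    ∫ t : ℝ, Laplace f (c + t * Complex.I) * Complex.exp ((c + t * Complex.I) * x) =
      2 * Real.pi * f x := by
  let g : ℝ → ℂ := fun x => f x * Complex.exp (-(c * x))
  let h : ℝ → ℂ := fun t => Complex.exp (t * Complex.I * x) * Laplace f (c + t * Complex.I)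
  have hpi : 0 < 2 * Real.pi := Real.two_pi_pos
  have hgF : 𝓕 g = fun ξ : ℝ => Laplace f (c + (2 * Real.pi * ξ : ℝ) * Complex.I) :=
    funext (fourier_mul_cexp_neg_mul hf)
  have hgFint : Integrable (𝓕 g) := hgF ▸ hint.comp_mul_left' hpi.ne'
  have hg : Integrable g := integrable_mul_cexp_neg_mul hfc hf hC hc
  have hinv : 𝓕⁻ (𝓕 g) x = ∫ ξ : ℝ, h (2 * Real.pi * ξ) := by
    rw [Real.fourierInv_eq', hgF]
    congr 1 with ξ
    simp only [h, smul_eq_mul, RCLike.inner_apply, conj_trivial]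
    congr 2
    push_cast
    ring
  rw [hg.fourierInv_fourier_eq hgFint (Continuous.continuousAt (by fun_prop)),
    Measure.integral_comp_mul_left, abs_of_pos (inv_pos.2 hpi), Complex.real_smul,
    Complex.ofReal_inv, eq_inv_mul_iff_mul_eq₀ (Complex.ofReal_ne_zero.2 hpi.ne')] at hinv
  have hcancel : Complex.exp (c * x) * Complex.exp (-(c * x)) = 1 := by
    rw [← Complex.exp_add, add_neg_cancel, Complex.exp_zero]
  calc ∫ t : ℝ, Laplace f (c + t * Complex.I) * Complex.exp ((c + t * Complex.I) * x)
      = ∫ t, Complex.exp (c * x) * h t := by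
        congr 1 with t
        rw [add_mul, Complex.exp_add]
        ring
    _ = Complex.exp (c * x) * ((2 * Real.pi : ℝ) * g x) := by rw [integral_const_mul, hinv]
    _ = 2 * Real.pi * f x := by
        push_cast
        linear_combination 2 * Real.pi * f x * hcancel

end Inversion

/-! ### The holomorphic family of kernels -/

/-- The function `x ↦ e^{wx}`, extended by `1` to the negative half-line. Off the half-plane
`Re w ≤ 0`, where it would be unbounded, the real part of `w` is replaced by `0`. -/
noncomputable def expBCF (w : ℂ) : BoundedContinuousFunction ℝ ℂ :=
  .ofNormedAddCommGroup (fun x => Complex.exp (⟨min w.re 0, w.im⟩ * (max x 0 : ℝ)))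
    (by fun_prop) 1 fun x => by
      rw [Complex.norm_exp, Real.exp_le_one_iff, Complex.re_mul_ofReal]
      exact mul_nonpos_of_nonpos_of_nonneg (min_le_right _ _) (le_max_right _ _)

theorem expBCF_apply {w : ℂ} (hw : w.re ≤ 0) (x : ℝ) :
    expBCF w x = Complex.exp (w * (max x 0 : ℝ)) := by
  simp [expBCF, min_eq_left hw]

theorem norm_expBCF_le (w : ℂ) : ‖expBCF w‖ ≤ 1 :=
  BoundedContinuousFunction.norm_ofNormedAddCommGroup_le _ zero_le_one _

/-- The ramp `min (max x 0) n`. -/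
noncomputable def rampBCF (n : ℕ) : BoundedContinuousFunction ℝ ℂ :=
  .ofNormedAddCommGroup (fun x => ((min (max x 0) n : ℝ) : ℂ)) (by fun_prop) n fun x => by
    rw [Complex.norm_of_nonneg (by positivity)]
    exact min_le_right _ _

theorem exp_smul_rampBCF_apply (n : ℕ) (w : ℂ) (x : ℝ) :
    NormedSpace.exp (w • rampBCF n) x = Complex.exp (w * (min (max x 0) n : ℝ)) := by
  have hsum := (NormedSpace.exp_series_hasSum_exp' (𝕂 := ℂ) (w • rampBCF n)).mapL
    (BoundedContinuousFunction.evalCLM ℂ x)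
  rw [Complex.exp_eq_exp_ℂ]
  exact hsum.unique (NormedSpace.exp_series_hasSum_exp' (𝕂 := ℂ) (w * (min (max x 0) n : ℝ)))

theorem norm_expBCF_sub_exp_smul_rampBCF_le {w : ℂ} {c : ℝ} (hw : w.re ≤ c) (hc : c ≤ 0) (n : ℕ) :
    ‖expBCF w - NormedSpace.exp (w • rampBCF n)‖ ≤ 2 * Real.exp (c * n) := by
  refine (BoundedContinuousFunction.norm_le (by positivity)).2 fun x => ?_
  rw [BoundedContinuousFunction.sub_apply, expBCF_apply (by linarith), exp_smul_rampBCF_apply]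
  rcases le_total (max x 0) n with hx | hx
  · rw [min_eq_left hx, sub_self, norm_zero]
    positivity
  · have hbound (y : ℝ) (hy : n ≤ y) : ‖Complex.exp (w * y)‖ ≤ Real.exp (c * n) := by
      rw [Complex.norm_exp, Complex.re_mul_ofReal]
      exact Real.exp_le_exp.2 (by nlinarith [(Nat.cast_nonneg n : (0 : ℝ) ≤ n)])
    rw [min_eq_right hx]
    linarith [norm_sub_le (Complex.exp (w * (max x 0 : ℝ))) (Complex.exp (w * (n : ℝ))),
      hbound _ hx, hbound n le_rfl]

theorem differentiableAt_expBCF {w : ℂ} (hw : w.re < 0) : DifferentiableAt ℂ expBCF w := by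
  obtain ⟨c, hwc, hc⟩ := exists_between hw
  have hlim : Tendsto (fun n : ℕ => 2 * Real.exp (c * n)) atTop (nhds 0) := by
    simpa using (Real.tendsto_exp_atBot.comp
      (tendsto_natCast_atTop_atTop.const_mul_atTop_of_neg hc)).const_mul 2
  have hunif : TendstoUniformlyOn (fun (n : ℕ) w => NormedSpace.exp (w • rampBCF n)) expBCF
      atTop {w | w.re < c} := by
    refine Metric.tendstoUniformlyOn_iff.2 fun ε hε => ?_
    filter_upwards [hlim.eventually_lt_const hε] with n hn v hv
    rw [dist_eq_norm]
    exact (norm_expBCF_sub_exp_smul_rampBCF_le (le_of_lt hv) hc.le n).trans_lt hn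
  have hopen : IsOpen {w : ℂ | w.re < c} := isOpen_lt Complex.continuous_re continuous_const
  exact (hunif.tendstoLocallyUniformlyOn.differentiableOn (.of_forall fun n v _ =>
    (hasDerivAt_exp_smul_const (rampBCF n) v).differentiableAt.differentiableWithinAt)
      hopen).differentiableAt (hopen.mem_nhds hwc)

instance compactSpace_Rbar (α r : ℝ) : CompactSpace (Rbar α r) :=
  isCompact_iff_compactSpace.1 (isCompact_Rbar α r)

/-- The Cauchy kernel `s ↦ 1 / (s - w)` on the rectangle. -/
noncomputable def cauchyKernel (α r : ℝ) (w : ℂ) : C(Rbar α r, ℂ) :=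
  -resolvent ((ContinuousMap.id ℂ).restrict (Rbar α r)) w

section CauchyKernel

variable {α r : ℝ} {w : ℂ}

theorem mem_resolventSet_restrict_id (hw : w ∉ Rbar α r) :
    w ∈ resolventSet ℂ ((ContinuousMap.id ℂ).restrict (Rbar α r)) := by
  by_contra hspec
  have hrange : w ∈ range ((ContinuousMap.id ℂ).restrict (Rbar α r)) :=
    ContinuousMap.spectrum_eq_range ((ContinuousMap.id ℂ).restrict (Rbar α r)) ▸ hspec
  obtain ⟨s, rfl⟩ := hrange
  exact hw s.2

theorem cauchyKernel_apply (hw : w ∉ Rbar α r) (s : Rbar α r) :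
    cauchyKernel α r w s = 1 / (s - w) := by
  have hne : (s : ℂ) - w ≠ 0 := sub_ne_zero.2 fun h => hw (h ▸ s.2)
  have hinv := DFunLike.congr_fun
    (Ring.mul_inverse_cancel _ (mem_resolventSet_restrict_id hw)) s
  rw [eq_div_iff hne]
  simp only [ContinuousMap.mul_apply, ContinuousMap.sub_apply, algebraMap_apply, smul_eq_mul,
    mul_one, ContinuousMap.restrict_apply, ContinuousMap.id_apply, ContinuousMap.one_apply,
    cauchyKernel, resolvent, ContinuousMap.neg_apply, neg_mul] at hinv ⊢
  linear_combination hinv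

theorem differentiableAt_cauchyKernel (hw : w ∉ Rbar α r) :
    DifferentiableAt ℂ (cauchyKernel α r) w :=
  (spectrum.hasDerivAt_resolvent_const_left
    (mem_resolventSet_restrict_id hw)).differentiableAt.neg

theorem norm_cauchyKernel_le {δ : ℝ} (hδ : 0 < δ) (hw : r + δ ≤ |w.im|) :
    ‖cauchyKernel α r w‖ ≤ 1 / δ := by
  have hmem : w ∉ Rbar α r := fun h => by linarith [h.2.2]
  refine (ContinuousMap.norm_le _ (by positivity)).2 fun s => ?_
  rw [cauchyKernel_apply hmem, norm_div, norm_one]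
  gcongr
  have him := Complex.abs_im_le_norm (w - s)
  rw [Complex.sub_im, norm_sub_rev] at him
  linarith [abs_sub_abs_le_abs_sub w.im (s : ℂ).im, s.2.2.2]

end CauchyKernel

/-- The Banach space in which the approximation takes place; `((u, v), H)` stands for a function
`u`, its derivative `v` and its transform `H`. -/
abbrev KernelSpace (α r : ℝ) : Type :=
  (BoundedContinuousFunction ℝ ℂ × BoundedContinuousFunction ℝ ℂ) × C(Rbar α r, ℂ)

/-- The exponential `e^{wx}` together with its derivative and its Laplace transform. -/
noncomputable def kernelVec (α r : ℝ) (w : ℂ) : KernelSpace α r :=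
  ((expBCF w, w • expBCF w), cauchyKernel α r w)

section KernelVec

variable {α r : ℝ} {w : ℂ}

theorem differentiableAt_kernelVec (hw : w.re < 0) (hwR : w ∉ Rbar α r) :
    DifferentiableAt ℂ (kernelVec α r) w :=
  ((differentiableAt_expBCF hw).prodMk
    (differentiableAt_fun_id.fun_smul (differentiableAt_expBCF hw))).prodMk
      (differentiableAt_cauchyKernel hwR)

theorem norm_kernelVec_le {δ : ℝ} (hδ : 0 < δ) (hw : r + δ ≤ |w.im|) :
    ‖kernelVec α r w‖ ≤ (1 + 1 / δ) * (1 + ‖w‖) := by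
  have hexp := norm_expBCF_le w
  have hinv : 0 < 1 / δ := by positivity
  rw [kernelVec, Prod.norm_mk, Prod.norm_mk, norm_smul]
  refine max_le (max_le ?_ ?_) ?_
  · nlinarith [norm_nonneg w]
  · nlinarith [norm_nonneg w]
  · nlinarith [norm_nonneg w, norm_cauchyKernel_le (α := α) hδ hw]

end KernelVec

/-! ### Closed submodules -/

section ClosedSubmodule

variable {E : Type*} [NormedAddCommGroup E] [NormedSpace ℂ E] [CompleteSpace E]
  {S : Submodule ℂ E}

theorem mem_of_isPreconnected_of_eventually_mem (hS : IsClosed (S : Set E)) {U : Set ℂ}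
    {g : ℂ → E} (hg : DifferentiableOn ℂ g U) (hU : IsOpen U) (hU' : IsPreconnected U) {w₀ : ℂ}
    (hw₀ : w₀ ∈ U) (hmem : ∀ᶠ w in nhds w₀, g w ∈ S) : ∀ w ∈ U, g w ∈ S := by
  have hquot : EqOn (fun w => S.mkQL (g w)) 0 U :=
    ((S.mkQL.differentiable.comp_differentiableOn hg).analyticOnNhd
      hU).eqOn_zero_of_preconnected_of_eventuallyEq_zero hU' hw₀ <| by
        filter_upwards [hmem] with w hw using (Submodule.Quotient.mk_eq_zero S).2 hw
  exact fun w hw => (Submodule.Quotient.mk_eq_zero S).1 (hquot hw)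

theorem integral_mem_of_ae_mem (hS : IsClosed (S : Set E)) {X : Type*} [MeasurableSpace X]
    {μ : Measure X} {g : X → E} (hg : Integrable g μ) (hmem : ∀ᵐ x ∂μ, g x ∈ S) :
    ∫ x, g x ∂μ ∈ S := by
  have hquot : ∫ x, S.mkQL (g x) ∂μ = 0 := integral_eq_zero_of_ae <| by
    filter_upwards [hmem] with x hx using (Submodule.Quotient.mk_eq_zero S).2 hx
  rw [S.mkQL.integral_comp_comm hg] at hquot
  exact (Submodule.Quotient.mk_eq_zero S).1 hquot

theorem intervalIntegral_mem_of_forall_mem (hS : IsClosed (S : Set E)) {a b : ℝ} {g : ℝ → E}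
    (hg : IntervalIntegrable g volume a b) (hmem : ∀ x ∈ uIcc a b, g x ∈ S) :
    ∫ x in a..b, g x ∈ S := by
  refine S.sub_mem (integral_mem_of_ae_mem hS hg.1 ?_) (integral_mem_of_ae_mem hS hg.2 ?_)
  · exact ae_restrict_of_forall_mem measurableSet_Ioc fun x hx =>
      hmem x (Icc_subset_uIcc (Ioc_subset_Icc_self hx))
  · exact ae_restrict_of_forall_mem measurableSet_Ioc fun x hx =>
      hmem x (Icc_subset_uIcc' (Ioc_subset_Icc_self hx))

end ClosedSubmodule

/-- The closed span of the kernels attached to the exponentials `e^{wx}` that belong to `V_β`. -/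
noncomputable def kernelSpan (β α r : ℝ) : Submodule ℂ (KernelSpace α r) :=
  (Submodule.span ℂ (kernelVec α r '' {w | w.re < β})).topologicalClosure

theorem isClosed_kernelSpan (β α r : ℝ) : IsClosed (kernelSpan β α r : Set (KernelSpace α r)) :=
  Submodule.isClosed_topologicalClosure _

theorem kernelVec_mem_kernelSpan_of_re_lt {β α r : ℝ} {w : ℂ} (hw : w.re < β) :
    kernelVec α r w ∈ kernelSpan β α r :=
  Submodule.le_topologicalClosure _ (Submodule.subset_span ⟨w, hw, rfl⟩)

/-- The left half-plane with the closed rectangle removed. -/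
def puncturedHalfPlane (α r : ℝ) : Set ℂ := {w | w.re < 0} \ Rbar α r

theorem isOpen_puncturedHalfPlane (α r : ℝ) : IsOpen (puncturedHalfPlane α r) :=
  (isOpen_lt Complex.continuous_re continuous_const).sdiff (isCompact_Rbar α r).isClosed

theorem continuousOn_kernelVec (α r : ℝ) :
    ContinuousOn (kernelVec α r) (puncturedHalfPlane α r) := fun _ hw =>
  (differentiableAt_kernelVec hw.1 hw.2).continuousAt.continuousWithinAt

theorem puncturedHalfPlane_eq {α : ℝ} (hα : α < 0) (r : ℝ) :
    puncturedHalfPlane α r = {w | w.re < α} ∪ ({w | w.re < 0} ∩ {w | r < w.im}) ∪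
      ({w | w.re < 0} ∩ {w | w.im < -r}) := by
  ext w
  simp only [puncturedHalfPlane, Rbar, Set.mem_sdiff, mem_union, mem_inter_iff, mem_ofPred_eq,
    abs_le]
  grind

theorem isPreconnected_puncturedHalfPlane {α r : ℝ} (hα : α < 0) :
    IsPreconnected (puncturedHalfPlane α r) := by
  have hupper := (convex_halfSpace_re_lt 0).inter (convex_halfSpace_im_gt r)
  have hlower := (convex_halfSpace_re_lt 0).inter (convex_halfSpace_im_lt (-r))
  rw [puncturedHalfPlane_eq hα]
  refine ((convex_halfSpace_re_lt α).isPreconnected.union ⟨α - 1, r + 1⟩ ?_ ?_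
    hupper.isPreconnected).union ⟨α - 1, -r - 1⟩ (.inl ?_) ?_ hlower.isPreconnected
  all_goals simp only [mem_inter_iff, mem_ofPred_eq]; grind

theorem kernelVec_mem_kernelSpan {β α r : ℝ} (hβα : β < α) (hα : α < 0) {w : ℂ}
    (hw : w ∈ puncturedHalfPlane α r) : kernelVec α r w ∈ kernelSpan β α r := by
  refine mem_of_isPreconnected_of_eventually_mem (isClosed_kernelSpan β α r)
    (fun w hw => (differentiableAt_kernelVec hw.1 hw.2).differentiableWithinAt)
    (isOpen_puncturedHalfPlane α r) (isPreconnected_puncturedHalfPlane hα)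
    (w₀ := (β - 1 : ℝ)) ?_ ?_ w hw
  · rw [puncturedHalfPlane_eq hα]
    exact .inl (.inl (by rw [mem_ofPred_eq, Complex.ofReal_re]; linarith))
  · have hopen : IsOpen {w : ℂ | w.re < β} := isOpen_lt Complex.continuous_re continuous_const
    filter_upwards [hopen.mem_nhds (show ((β - 1 : ℝ) : ℂ).re < β by simp)] with v hv
    exact kernelVec_mem_kernelSpan_of_re_lt hv

/-! ### Relations on the closed span -/

theorem Ropen_eq_reProdIm (α r : ℝ) : Ropen α r = Ioo α 1 ×ℂ Ioo (-r) r := by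
  ext s
  simp only [Ropen, mem_ofPred_eq, Complex.mem_reProdIm, mem_Ioo, abs_lt, and_assoc]

theorem isOpen_Ropen (α r : ℝ) : IsOpen (Ropen α r) :=
  Ropen_eq_reProdIm α r ▸ isOpen_Ioo.reProdIm isOpen_Ioo

theorem Ropen_subset_Rbar (α r : ℝ) : Ropen α r ⊆ Rbar α r :=
  fun _ hs => ⟨hs.1.le, hs.2.1.le, hs.2.2.le⟩

theorem isPreconnected_Ropen (α r : ℝ) : IsPreconnected (Ropen α r) := by
  rw [Ropen_eq_reProdIm]
  exact (((convex_Ioo α 1).linear_preimage Complex.reLm).inter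
    ((convex_Ioo (-r) r).linear_preimage Complex.imLm)).isPreconnected

theorem closure_Ropen {α r : ℝ} (hα : α < 1) (hr : 0 < r) : closure (Ropen α r) = Rbar α r := by
  rw [Ropen_eq_reProdIm, Rbar_eq_reProdIm, Complex.closure_reProdIm, closure_Ioo hα.ne,
    closure_Ioo (by linarith)]

theorem eqOn_Rbar {α r : ℝ} {F H : ℂ → ℂ} (hα : α < 1) (hr : 0 < r)
    (hH : DifferentiableOn ℂ H (Ropen α r)) (hF : DifferentiableOn ℂ F (Ropen α r))
    (hHc : ContinuousOn H (Rbar α r)) (hFc : ContinuousOn F (Rbar α r))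
    (h : ∀ s ∈ Rbar α r, 0 < s.re → H s = F s) : EqOn H F (Rbar α r) := by
  let s₀ : ℂ := ((max α 0 + 1) / 2 : ℝ)
  have hmax : max α 0 < 1 := max_lt hα one_pos
  have hs₀ : s₀ ∈ Ropen α r := by
    simp only [Ropen, s₀, mem_ofPred_eq, Complex.ofReal_re, Complex.ofReal_im, abs_zero]
    exact ⟨by linarith [le_max_left α 0], by linarith, hr⟩
  have hs₀_pos : 0 < s₀.re := by
    rw [Complex.ofReal_re]
    positivity
  have hopen : IsOpen {s : ℂ | 0 < s.re} := isOpen_lt continuous_const Complex.continuous_re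
  have heq : EqOn H F (Ropen α r) :=
    (hH.analyticOnNhd (isOpen_Ropen α r)).eqOn_of_preconnected_of_eventuallyEq
      (hF.analyticOnNhd (isOpen_Ropen α r)) (isPreconnected_Ropen α r) hs₀ <| by
        filter_upwards [hopen.mem_nhds hs₀_pos, (isOpen_Ropen α r).mem_nhds hs₀] with s hs hsR
        exact h s (Ropen_subset_Rbar α r hsR) hs
  exact heq.of_subset_closure hHc hFc (Ropen_subset_Rbar α r) (closure_Ropen hα hr).ge

section KernelSpan

variable {β α r : ℝ} {b : KernelSpace α r}

theorem exists_memVHalfPlane_of_mem_span (hβα : β < α) (hα : α < 0)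
    (hb : b ∈ Submodule.span ℂ (kernelVec α r '' {w | w.re < β})) :
    ∃ σ σ' G, MemVHalfPlane β σ σ' G ∧ (∀ x, 0 ≤ x → b.1.1 x = σ x) ∧
      (∀ x, 0 ≤ x → b.1.2 x = σ' x) ∧ ∀ s : Rbar α r, b.2 s = G s := by
  induction hb using Submodule.span_induction with
  | mem b hb =>
    obtain ⟨w, hw, rfl⟩ := hb
    have hw0 : w.re ≤ 0 := (hw.trans (hβα.trans hα)).le
    have hwR : w ∉ Rbar α r := fun h => by linarith [h.1, show w.re < β from hw]
    have hexp (x : ℝ) (hx : 0 ≤ x) : expBCF w x = Complex.exp (w * x) := by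
      rw [expBCF_apply hw0, max_eq_left hx]
    exact ⟨_, _, _, .cexp hw (hβα.trans hα), hexp, fun x hx => congrArg (w * ·) (hexp x hx),
      cauchyKernel_apply hwR⟩
  | zero =>
    refine ⟨_, _, _, (MemVHalfPlane.cexp (w := (β - 1 : ℝ)) ?_ (hβα.trans hα)).const_mul 0, ?_⟩
    · rw [Complex.ofReal_re]; linarith
    · simp
  | add b d _ _ hb hd =>
    obtain ⟨σ, σ', G, hσ, h, h', hG⟩ := hb
    obtain ⟨ρ, ρ', H, hρ, k, k', hH⟩ := hd
    exact ⟨_, _, _, hσ.add hρ, fun x hx => congrArg₂ (· + ·) (h x hx) (k x hx),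
      fun x hx => congrArg₂ (· + ·) (h' x hx) (k' x hx), fun s => congrArg₂ (· + ·) (hG s) (hH s)⟩
  | smul c b _ hb =>
    obtain ⟨σ, σ', G, hσ, h, h', hG⟩ := hb
    exact ⟨_, _, _, hσ.const_mul c, fun x hx => congrArg (c * ·) (h x hx),
      fun x hx => congrArg (c * ·) (h' x hx), fun s => congrArg (c * ·) (hG s)⟩

theorem exists_memVHalfPlane_near_of_mem_kernelSpan (hβα : β < α) (hα : α < 0)
    (hb : b ∈ kernelSpan β α r) {ε : ℝ} (hε : 0 < ε) :
    ∃ σ σ' G, MemVHalfPlane β σ σ' G ∧ (∀ x, 0 ≤ x → ‖b.1.1 x - σ x‖ ≤ ε) ∧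
      (∀ x, 0 ≤ x → ‖b.1.2 x - σ' x‖ ≤ ε) ∧ ∀ s : Rbar α r, ‖b.2 s - G s‖ ≤ ε := by
  obtain ⟨d, hd, hbd⟩ := Metric.mem_closure_iff.1 hb ε hε
  rw [dist_eq_norm] at hbd
  obtain ⟨σ, σ', G, hσ, h, h', hG⟩ := exists_memVHalfPlane_of_mem_span hβα hα hd
  refine ⟨σ, σ', G, hσ, fun x hx => ?_, fun x hx => ?_, fun s => ?_⟩
  · rw [← h x hx]
    exact ((b - d).1.1.norm_coe_le_norm x).trans
      ((norm_fst_le _).trans ((norm_fst_le _).trans hbd.le))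
  · rw [← h' x hx]
    exact ((b - d).1.2.norm_coe_le_norm x).trans
      ((norm_snd_le _).trans ((norm_fst_le _).trans hbd.le))
  · rw [← hG s]
    exact ((b - d).2.norm_coe_le_norm s).trans ((norm_snd_le _).trans hbd.le)

theorem laplace_eq_of_mem_kernelSpan (hβα : β < α) (hα : α < 0) (hb : b ∈ kernelSpan β α r)
    {s : Rbar α r} (hs : 0 < (s : ℂ).re) : b.2 s = Laplace b.1.1 s := by
  have hconv : LaplaceConvergent b.1.1 s :=
    laplaceConvergent_of_norm_le (C := ‖b.1.1‖) (b := 0) b.1.1.continuous.continuousOn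
      (fun x _ => by simpa using b.1.1.norm_coe_le_norm x) hs
  have hdist (ε : ℝ) (hε : 0 < ε) :
      ‖b.2 s - Laplace b.1.1 s‖ ≤ ε * (1 + 1 / (s : ℂ).re) := by
    obtain ⟨σ, σ', G, hσ, hu, -, hG⟩ :=
      exists_memVHalfPlane_near_of_mem_kernelSpan hβα hα hb hε
    have hlap : ‖Laplace (fun x => b.1.1 x - σ x) s‖ ≤ ε / ((s : ℂ).re - 0) :=
      norm_laplace_le (fun x hx => by simpa using hu x hx) hs
    rw [laplace_sub hconv (hσ.laplaceConvergent hs), ← hσ.eq_laplace s hs, sub_zero,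
      norm_sub_rev] at hlap
    calc ‖b.2 s - Laplace b.1.1 s‖ ≤ ‖b.2 s - G s‖ + ‖G s - Laplace b.1.1 s‖ :=
          norm_sub_le_norm_sub_add_norm_sub _ _ _
      _ ≤ ε + ε / (s : ℂ).re := add_le_add (hG s) hlap
      _ = ε * (1 + 1 / (s : ℂ).re) := by ring
  have hpos : 0 < 1 + 1 / (s : ℂ).re := by positivity
  refine sub_eq_zero.1 (norm_le_zero_iff.1 (le_of_forall_pos_le_add fun η hη => ?_))
  simpa only [div_mul_cancel₀ η hpos.ne', zero_add] using hdist _ (div_pos hη hpos)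

theorem differentiableOn_of_mem_kernelSpan (hβα : β < α) (hα : α < 0) (hb : b ∈ kernelSpan β α r)
    {H : ℂ → ℂ} (hH : ∀ s : Rbar α r, b.2 s = H s) : DifferentiableOn ℂ H (Ropen α r) := by
  choose! σ σ' G hσ _ _ hG using fun (n : ℕ) =>
    exists_memVHalfPlane_near_of_mem_kernelSpan hβα hα hb (Nat.one_div_pos_of_nat (n := n))
  have hunif : TendstoUniformlyOn G H atTop (Ropen α r) := by
    refine Metric.tendstoUniformlyOn_iff.2 fun ε hε => ?_
    filter_upwards [tendsto_one_div_add_atTop_nhds_zero_nat.eventually_lt_const hε] with n hn s hs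
    rw [dist_eq_norm, ← hH ⟨s, Ropen_subset_Rbar α r hs⟩]
    exact (hG n _).trans_lt hn
  exact hunif.tendstoLocallyUniformlyOn.differentiableOn
    (.of_forall fun n => (hσ n).differentiableOn.mono fun s hs => hβα.trans hs.1)
    (isOpen_Ropen α r)

theorem eq_of_mem_kernelSpan (hβα : β < α) (hα : α < 0) (hr : 0 < r) (hb : b ∈ kernelSpan β α r)
    {f f' : ℝ → ℂ} {F : ℂ → ℂ} (hF : MemVRect α r f f' F) (hf : ∀ x, 0 ≤ x → b.1.1 x = f x)
    (s : Rbar α r) : b.2 s = F s := by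
  let H : ℂ → ℂ := Function.extend Subtype.val b.2 0
  have hH (s : Rbar α r) : b.2 s = H s := (Subtype.val_injective.extend_apply b.2 0 s).symm
  have hcont : ContinuousOn H (Rbar α r) := by
    rw [continuousOn_iff_continuous_domRestrict]
    exact b.2.continuous.congr hH
  have heq : EqOn H F (Rbar α r) := by
    refine eqOn_Rbar (hα.trans one_pos) hr (differentiableOn_of_mem_kernelSpan hβα hα hb hH)
      hF.differentiableOn hcont hF.continuousOn fun s hs hs0 => ?_
    rw [← hH ⟨s, hs⟩, laplace_eq_of_mem_kernelSpan hβα hα hb hs0, hF.eq_laplace s hs hs0]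
    exact laplace_congr fun x hx => hf x hx.le
  rw [hH, heq s.2]

theorem vBetaApproximable_of_mem_kernelSpan (hβα : β < α) (hα : α < 0) (hr : 0 < r)
    (hb : b ∈ kernelSpan β α r) {f f' : ℝ → ℂ} {F : ℂ → ℂ} (hF : MemVRect α r f f' F)
    (hf : ∀ x, 0 ≤ x → b.1.1 x = f x) (hf' : ∀ x, 0 ≤ x → b.1.2 x = f' x) :
    VBetaApproximable β α r f' F := fun ε hε => by
  obtain ⟨σ, σ', G, hσ, -, hσ', hG⟩ := exists_memVHalfPlane_near_of_mem_kernelSpan hβα hα hb hε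
  refine ⟨σ, σ', G, hσ, fun x hx => hf' x hx ▸ hσ' x hx, fun s hs => ?_⟩
  rw [← eq_of_mem_kernelSpan hβα hα hr hb hF hf ⟨s, hs⟩]
  exact hG ⟨s, hs⟩

end KernelSpan

/-! ### Deforming the line of integration -/

section Detour

variable {E : Type*} [NormedAddCommGroup E] {g : ℂ → E} {A c ρ : ℝ}

/-- The left, lower and upper sides of the rectangle with vertices `A ± iρ` and `c ± iρ`. -/
def detourPath (A c ρ : ℝ) : Set ℂ := {A} ×ℂ uIcc (-ρ) ρ ∪ uIcc A c ×ℂ {-ρ, ρ}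

theorem left_mem_detourPath {y : ℝ} (hy : y ∈ uIcc (-ρ) ρ) :
    (A + y * Complex.I : ℂ) ∈ detourPath A c ρ :=
  .inl (by simpa [Complex.mem_reProdIm] using hy)

theorem lower_mem_detourPath {x : ℝ} (hx : x ∈ uIcc A c) :
    (x + (-ρ : ℝ) * Complex.I : ℂ) ∈ detourPath A c ρ :=
  .inr (by simpa [Complex.mem_reProdIm] using hx)

theorem upper_mem_detourPath {x : ℝ} (hx : x ∈ uIcc A c) :
    (x + ρ * Complex.I : ℂ) ∈ detourPath A c ρ :=
  .inr (by simpa [Complex.mem_reProdIm] using hx)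

theorem intervalIntegrable_left_side (hg : ContinuousOn g (detourPath A c ρ)) :
    IntervalIntegrable (fun y : ℝ => g (A + y * Complex.I)) volume (-ρ) ρ :=
  (hg.comp (by fun_prop) fun _ => left_mem_detourPath).intervalIntegrable

theorem intervalIntegrable_lower_side (hg : ContinuousOn g (detourPath A c ρ)) :
    IntervalIntegrable (fun x : ℝ => g (x + (-ρ : ℝ) * Complex.I)) volume A c :=
  (hg.comp (by fun_prop) fun _ => lower_mem_detourPath).intervalIntegrable

theorem intervalIntegrable_upper_side (hg : ContinuousOn g (detourPath A c ρ)) :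
    IntervalIntegrable (fun x : ℝ => g (x + ρ * Complex.I)) volume A c :=
  (hg.comp (by fun_prop) fun _ => upper_mem_detourPath).intervalIntegrable

variable [NormedSpace ℂ E]

/-- The integral `∫ g(w) dw / i` along `detourPath A c ρ`, traversed from `c - iρ` to `c + iρ`. -/
noncomputable def detour (g : ℂ → E) (A c ρ : ℝ) : E :=
  (∫ y in -ρ..ρ, g (A + y * Complex.I)) +
    Complex.I • ((∫ x in A..c, g (x + (-ρ : ℝ) * Complex.I)) - ∫ x in A..c, g (x + ρ * Complex.I))

theorem detour_eq_integral [CompleteSpace E]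
    (hg : DifferentiableOn ℂ g (uIcc A c ×ℂ uIcc (-ρ) ρ)) :
    detour g A c ρ = ∫ y in -ρ..ρ, g (c + y * Complex.I) := by
  have hrect := congrArg (Complex.I • ·)
    (Complex.integral_boundary_rect_eq_zero_of_differentiableOn g ⟨A, -ρ⟩ ⟨c, ρ⟩ hg)
  simp only [smul_sub, smul_add, smul_smul, Complex.I_mul_I, smul_zero] at hrect
  rw [detour, smul_sub]
  linear_combination (norm := module) hrect

theorem detour_mem [CompleteSpace E] (hg : ContinuousOn g (detourPath A c ρ))
    {S : Submodule ℂ E} (hS : IsClosed (S : Set E))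
    (hmem : ∀ w ∈ detourPath A c ρ, g w ∈ S) : detour g A c ρ ∈ S :=
  S.add_mem
    (intervalIntegral_mem_of_forall_mem hS (intervalIntegrable_left_side hg) fun _ hy =>
      hmem _ (left_mem_detourPath hy))
    (S.smul_mem _ (S.sub_mem
      (intervalIntegral_mem_of_forall_mem hS (intervalIntegrable_lower_side hg) fun _ hx =>
        hmem _ (lower_mem_detourPath hx))
      (intervalIntegral_mem_of_forall_mem hS (intervalIntegrable_upper_side hg) fun _ hx =>
        hmem _ (upper_mem_detourPath hx))))

theorem map_detour [CompleteSpace E] (hg : ContinuousOn g (detourPath A c ρ)) {E' : Type*}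
    [NormedAddCommGroup E'] [NormedSpace ℂ E'] [CompleteSpace E'] (V : E →L[ℂ] E') :
    V (detour g A c ρ) = detour (V ∘ g) A c ρ := by
  rw [detour, map_add, map_smul, map_sub,
    ← V.intervalIntegral_comp_comm (intervalIntegrable_left_side hg),
    ← V.intervalIntegral_comp_comm (intervalIntegrable_lower_side hg),
    ← V.intervalIntegral_comp_comm (intervalIntegrable_upper_side hg)]
  rfl

theorem detour_congr {g₁ g₂ : ℂ → E} (h : EqOn g₁ g₂ (detourPath A c ρ)) :
    detour g₁ A c ρ = detour g₂ A c ρ := by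
  rw [detour, detour, intervalIntegral.integral_congr fun _ hy => h (left_mem_detourPath hy),
    intervalIntegral.integral_congr fun _ hx => h (lower_mem_detourPath hx),
    intervalIntegral.integral_congr fun _ hx => h (upper_mem_detourPath hx)]

end Detour

/-! ### The contour integral of the kernels -/

section LineIntegrability

variable {c : ℝ} {f : ℝ → ℂ}

theorem LaplaceConvergent.continuous_laplace_line (hf : LaplaceConvergent f c) :
    Continuous fun t : ℝ => Laplace f (c + t * Complex.I) := by
  have hsplit (t x : ℝ) : f x * Complex.exp (-((c + t * Complex.I) * x)) =
      f x * Complex.exp (-(c * x)) * Complex.exp ((-(t * x) : ℝ) * Complex.I) := by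
    rw [mul_assoc, ← Complex.exp_add]
    push_cast
    ring_nf
  simp only [Laplace, hsplit]
  refine continuous_of_dominated (fun t => hf.aestronglyMeasurable.mul (by fun_prop))
    (fun t => .of_forall fun x => ?_) hf.norm (.of_forall fun x => by fun_prop)
  rw [norm_mul, Complex.norm_exp_ofReal_mul_I, mul_one]

theorem one_add_sq_mul_le {y t : ℝ} (hc : c ≠ 0) (hy : 0 ≤ y) (hyt : y ^ 2 = c ^ 2 + t ^ 2) :
    (1 + y) * (1 + t ^ 2) ≤ (1 + 1 / |c|) * (1 + 1 / c ^ 2) * y ^ 3 := by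
  have hcy : |c| ≤ y := abs_le_of_sq_le_sq (by linarith [sq_nonneg t]) hy
  have hlin : 1 + y ≤ (1 + 1 / |c|) * y := by
    have : 1 ≤ 1 / |c| * y := by rwa [one_div_mul_eq_div, one_le_div (abs_pos.2 hc)]
    linarith
  have hquad : 1 + t ^ 2 ≤ (1 + 1 / c ^ 2) * y ^ 2 := by
    have : 1 ≤ 1 / c ^ 2 * y ^ 2 := by
      rw [one_div_mul_eq_div, one_le_div (by positivity)]
      linarith [sq_nonneg t]
    linarith [sq_nonneg c]
  calc (1 + y) * (1 + t ^ 2) ≤ (1 + 1 / |c|) * y * ((1 + 1 / c ^ 2) * y ^ 2) := by gcongr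
    _ = (1 + 1 / |c|) * (1 + 1 / c ^ 2) * y ^ 3 := by ring

theorem norm_ofReal_add_mul_I_sq (c t : ℝ) : ‖(c + t * Complex.I : ℂ)‖ ^ 2 = c ^ 2 + t ^ 2 := by
  rw [← Complex.normSq_eq_norm_sq, Complex.normSq_add_mul_I]

theorem VerticalDecay.integrable_one_add_norm_mul (hf : VerticalDecay 3 c f) (hc : c ≠ 0)
    (hconv : LaplaceConvergent f c) :
    Integrable fun t : ℝ => (1 + ‖(c + t * Complex.I : ℂ)‖) * ‖Laplace f (c + t * Complex.I)‖ := by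
  obtain ⟨C, hC⟩ := hf
  have hcont := hconv.continuous_laplace_line
  refine (integrable_inv_one_add_sq.const_mul ((1 + 1 / |c|) * (1 + 1 / c ^ 2) * C)).mono'
    (by fun_prop) (.of_forall fun t => ?_)
  have hdecay := hC (c + t * Complex.I) (by simp)
  rw [Real.norm_of_nonneg (by positivity), ← div_eq_mul_inv, le_div_iff₀ (by positivity)]
  calc _ = (1 + ‖(c + t * Complex.I : ℂ)‖) * (1 + t ^ 2) * ‖Laplace f (c + t * Complex.I)‖ := by
        ring
    _ ≤ (1 + 1 / |c|) * (1 + 1 / c ^ 2) * ‖(c + t * Complex.I : ℂ)‖ ^ 3 *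
          ‖Laplace f (c + t * Complex.I)‖ :=
        mul_le_mul_of_nonneg_right
          (one_add_sq_mul_le hc (norm_nonneg _) (norm_ofReal_add_mul_I_sq c t)) (norm_nonneg _)
    _ ≤ (1 + 1 / |c|) * (1 + 1 / c ^ 2) * C := by
        rw [mul_assoc]
        gcongr

theorem VerticalDecay.integrableOn_smul (hf : VerticalDecay 3 c f) (hc : c ≠ 0)
    (hconv : LaplaceConvergent f c) {E : Type*} [NormedAddCommGroup E] [NormedSpace ℂ E]
    {g : ℝ → E} {S : Set ℝ} (hS : MeasurableSet S) (hg : ContinuousOn g S) {K : ℝ}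
    (hK : ∀ t ∈ S, ‖g t‖ ≤ K * (1 + ‖(c + t * Complex.I : ℂ)‖)) :
    IntegrableOn (fun t : ℝ => Laplace f (c + t * Complex.I) • g t) S := by
  have := secondCountableTopologyEither_of_left ℝ E
  refine ((hf.integrable_one_add_norm_mul hc hconv).const_mul K).integrableOn.mono'
    ((hconv.continuous_laplace_line.continuousOn.smul hg).aestronglyMeasurable hS) ?_
  filter_upwards [ae_restrict_mem hS] with t ht
  rw [norm_smul, mul_comm, ← mul_assoc]
  gcongr
  exact hK t ht

end LineIntegrability

theorem le_abs_of_notMem_Ioc {ρ t : ℝ} (ht : t ∉ Ioc (-ρ) ρ) : ρ ≤ |t| := by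
  by_contra! hlt
  exact ht ⟨(abs_lt.1 hlt).1, (abs_lt.1 hlt).2.le⟩

/-- The contour running up the line `Re w = c` with the detour of `detourPath A c ρ` passes to the
left of `Rbar α r`; the detour stays inside `Ropen α₁ r₁` and the line to the right of
`Re w = b`. -/
structure IsDetour (α r α₁ r₁ b A c ρ : ℝ) : Prop where
  height_pos : 0 < r
  lt_left : α₁ < A
  left_lt : A < α
  left_lt_line : A < c
  lt_line : b < c
  line_neg : c < 0
  height_lt : r < ρ
  lt_height : ρ < r₁

namespace IsDetour

variable {α r α₁ r₁ b A c ρ : ℝ}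

theorem rect_subset_Ropen (h : IsDetour α r α₁ r₁ b A c ρ) :
    uIcc A c ×ℂ uIcc (-ρ) ρ ⊆ Ropen α₁ r₁ := by
  have hρ : -ρ ≤ ρ := by linarith [h.height_pos, h.height_lt]
  rw [uIcc_of_le h.left_lt_line.le, uIcc_of_le hρ]
  intro w hw
  exact ⟨h.lt_left.trans_le hw.1.1, by linarith [hw.1.2, h.line_neg],
    (abs_le.2 hw.2).trans_lt h.lt_height⟩

theorem detourPath_subset_Ropen (h : IsDetour α r α₁ r₁ b A c ρ) :
    detourPath A c ρ ⊆ Ropen α₁ r₁ := by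
  refine Subset.trans (union_subset ?_ ?_) h.rect_subset_Ropen
  · exact Complex.reProdIm_subset_iff.2
      (prod_mono (singleton_subset_iff.2 left_mem_uIcc) Subset.rfl)
  · exact Complex.reProdIm_subset_iff.2
      (prod_mono Subset.rfl (pair_subset left_mem_uIcc right_mem_uIcc))

theorem detourPath_subset_puncturedHalfPlane (h : IsDetour α r α₁ r₁ b A c ρ) :
    detourPath A c ρ ⊆ puncturedHalfPlane α r := by
  have hρ : 0 < ρ := h.height_pos.trans h.height_lt
  rintro w (⟨hre, -⟩ | ⟨hre, him⟩)
  · have hre : w.re = A := hre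
    exact ⟨by simp only [mem_ofPred_eq]; linarith [h.left_lt_line, h.line_neg],
      fun hw => by linarith [hw.1, h.left_lt]⟩
  · rw [uIcc_of_le h.left_lt_line.le] at hre
    have him : |w.im| = ρ := by
      rcases him with him | him
      all_goals rw [him]; simp [abs_of_pos hρ]
    exact ⟨hre.2.trans_lt h.line_neg, fun hw => by linarith [hw.2.2, h.height_lt]⟩

end IsDetour

/-- The integral of `F • kernelVec` (over `dw / i`) along the contour of `IsDetour`, on whose
unbounded part `F` is given by the Laplace integral of `f`. -/
noncomputable def contourVec (α r : ℝ) (f : ℝ → ℂ) (F : ℂ → ℂ) (A c ρ : ℝ) : KernelSpace α r :=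
  (∫ t in (Ioc (-ρ) ρ)ᶜ, Laplace f (c + t * Complex.I) • kernelVec α r (c + t * Complex.I)) +
    detour (fun w => F w • kernelVec α r w) A c ρ

namespace IsDetour

variable {α r α₁ r₁ b A c ρ : ℝ} {f f' : ℝ → ℂ} {F : ℂ → ℂ}

theorem ray_mem_puncturedHalfPlane (h : IsDetour α r α₁ r₁ b A c ρ) {t : ℝ}
    (ht : t ∈ (Ioc (-ρ) ρ)ᶜ) : (c + t * Complex.I : ℂ) ∈ puncturedHalfPlane α r := by
  refine ⟨by simpa using h.line_neg, fun hw => ?_⟩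
  have him : |t| ≤ r := by simpa using hw.2.2
  linarith [le_abs_of_notMem_Ioc ht, h.height_lt]

theorem laplaceConvergent (h : IsDetour α r α₁ r₁ b A c ρ)
    (hf : MemVRectExtended α r α₁ r₁ b f f' F) : LaplaceConvergent f c := by
  obtain ⟨C, hC⟩ := hf.exists_norm_le
  exact laplaceConvergent_of_norm_le hf.continuous.continuousOn (fun x hx => (hC x hx).1)
    (by simpa using h.lt_line)

theorem integrableOn_rays (h : IsDetour α r α₁ r₁ b A c ρ)
    (hf : MemVRectExtended α r α₁ r₁ b f f' F) (hdecay : VerticalDecay 3 c f) :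
    IntegrableOn (fun t : ℝ => Laplace f (c + t * Complex.I) • kernelVec α r (c + t * Complex.I))
      (Ioc (-ρ) ρ)ᶜ := by
  refine hdecay.integrableOn_smul h.line_neg.ne (h.laplaceConvergent hf) measurableSet_Ioc.compl
    ((continuousOn_kernelVec α r).comp (by fun_prop) fun _ => h.ray_mem_puncturedHalfPlane)
    fun t ht => norm_kernelVec_le (δ := ρ - r) (sub_pos.2 h.height_lt) ?_
  simpa using le_abs_of_notMem_Ioc ht

theorem continuousOn_detour (h : IsDetour α r α₁ r₁ b A c ρ)
    (hf : MemVRectExtended α r α₁ r₁ b f f' F) :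
    ContinuousOn (fun w => F w • kernelVec α r w) (detourPath A c ρ) :=
  (hf.differentiableOn.continuousOn.mono h.detourPath_subset_Ropen).smul
    ((continuousOn_kernelVec α r).mono h.detourPath_subset_puncturedHalfPlane)

theorem contourVec_mem_kernelSpan {β : ℝ} (h : IsDetour α r α₁ r₁ b A c ρ)
    (hf : MemVRectExtended α r α₁ r₁ b f f' F) (hdecay : VerticalDecay 3 c f) (hβα : β < α)
    (hα : α < 0) : contourVec α r f F A c ρ ∈ kernelSpan β α r := by
  have hS := isClosed_kernelSpan β α r
  refine Submodule.add_mem _ (integral_mem_of_ae_mem hS (h.integrableOn_rays hf hdecay) ?_)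
    (detour_mem (h.continuousOn_detour hf) hS fun w hw => Submodule.smul_mem _ _
      (kernelVec_mem_kernelSpan hβα hα (h.detourPath_subset_puncturedHalfPlane hw)))
  exact ae_restrict_of_forall_mem measurableSet_Ioc.compl fun t ht => Submodule.smul_mem _ _
    (kernelVec_mem_kernelSpan hβα hα (h.ray_mem_puncturedHalfPlane ht))

theorem detour_eq_integral_laplace (h : IsDetour α r α₁ r₁ b A c ρ)
    (hf : MemVRectExtended α r α₁ r₁ b f f' F) {φ : ℂ → ℂ} (hφ : Differentiable ℂ φ) :
    detour (fun w => F w * φ w) A c ρ =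
      ∫ t in Ioc (-ρ) ρ, Laplace f (c + t * Complex.I) * φ (c + t * Complex.I) := by
  have hρ : -ρ ≤ ρ := by linarith [h.height_pos, h.height_lt]
  rw [detour_eq_integral ((hf.differentiableOn.mono h.rect_subset_Ropen).fun_mul
    hφ.differentiableOn), intervalIntegral.integral_of_le hρ]
  refine setIntegral_congr_fun measurableSet_Ioc fun t ht => ?_
  have ht : |t| < r₁ := (abs_le.2 ⟨ht.1.le, ht.2⟩).trans_lt h.lt_height
  rw [hf.eq_laplace (c + t * Complex.I) (by simpa using h.lt_line)
    (by simpa using h.line_neg.le.trans zero_le_one) (by simpa using ht)]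

theorem apply_contourVec (h : IsDetour α r α₁ r₁ b A c ρ)
    (hf : MemVRectExtended α r α₁ r₁ b f f' F) (hdecay : VerticalDecay 3 c f)
    {V : KernelSpace α r →L[ℂ] ℂ} {φ : ℂ → ℂ} (hφ : Differentiable ℂ φ)
    (hV : ∀ w : ℂ, w.re < 0 → V (kernelVec α r w) = φ w) :
    V (contourVec α r f F A c ρ) =
      ∫ t : ℝ, Laplace f (c + t * Complex.I) * φ (c + t * Complex.I) := by
  have hline (t : ℝ) : V (Laplace f (c + t * Complex.I) • kernelVec α r (c + t * Complex.I)) =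
      Laplace f (c + t * Complex.I) * φ (c + t * Complex.I) := by
    rw [map_smul, smul_eq_mul, hV _ (by simpa using h.line_neg)]
  have hpath : EqOn (V ∘ fun w => F w • kernelVec α r w) (fun w => F w * φ w)
      (detourPath A c ρ) := fun w hw => by
    rw [Function.comp_apply, map_smul, smul_eq_mul,
      hV w (h.detourPath_subset_puncturedHalfPlane hw).1]
  have hrays := V.integrable_comp (h.integrableOn_rays hf hdecay)
  have hcont := (h.laplaceConvergent hf).continuous_laplace_line
  have hmid : IntegrableOn (fun t : ℝ => Laplace f (c + t * Complex.I) * φ (c + t * Complex.I))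
      (Ioc (-ρ) ρ) :=
    ((hcont.mul (hφ.continuous.comp (by fun_prop))).integrableOn_Icc).mono_set Ioc_subset_Icc_self
  rw [contourVec, map_add, map_detour (h.continuousOn_detour hf), detour_congr hpath,
    h.detour_eq_integral_laplace hf hφ, ← V.integral_comp_comm (h.integrableOn_rays hf hdecay)]
  simp only [hline] at hrays ⊢
  rw [add_comm, ← setIntegral_union disjoint_compl_right measurableSet_Ioc.compl hmid hrays,
    union_compl_self, setIntegral_univ]

end IsDetour

namespace IsDetour

variable {α r α₁ r₁ b A c ρ : ℝ} {f f' : ℝ → ℂ} {F : ℂ → ℂ}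

theorem contourVec_fst_fst_apply (h : IsDetour α r α₁ r₁ b A c ρ)
    (hf : MemVRectExtended α r α₁ r₁ b f f' F) (hdecay : VerticalDecay 3 c f) {x : ℝ}
    (hx : 0 ≤ x) : (contourVec α r f F A c ρ).1.1 x = 2 * Real.pi * f x := by
  obtain ⟨C, hC⟩ := hf.exists_norm_le
  have hint : Integrable fun t : ℝ => Laplace f (c + t * Complex.I) := by
    simpa using hdecay.integrableOn_smul h.line_neg.ne (h.laplaceConvergent hf) .univ
      (g := fun _ => (1 : ℂ)) (K := 1) continuousOn_const fun t _ => by simp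
  rw [← integral_laplace_mul_cexp hf.continuous hf.eq_zero (fun x hx => (hC x hx).1) h.lt_line hint]
  exact h.apply_contourVec hf hdecay (φ := fun w => Complex.exp (w * x))
    (V := (BoundedContinuousFunction.evalCLM ℂ x).comp ((ContinuousLinearMap.fst ℂ _ _).comp
      (ContinuousLinearMap.fst ℂ _ _))) (by fun_prop) fun w hw => by
        simp [kernelVec, BoundedContinuousFunction.evalCLM, expBCF_apply hw.le, max_eq_left hx]

theorem contourVec_fst_snd_apply (h : IsDetour α r α₁ r₁ b A c ρ)
    (hf : MemVRectExtended α r α₁ r₁ b f f' F) (hdecay : VerticalDecay 3 c f) {x : ℝ}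
    (hx : 0 ≤ x) : (contourVec α r f F A c ρ).1.2 x = 2 * Real.pi * f' x := by
  obtain ⟨C, hC⟩ := hf.exists_norm_le
  have hderiv (t : ℝ) : Laplace f' (c + t * Complex.I) =
      Laplace f (c + t * Complex.I) * (c + t * Complex.I) := by
    rw [hf.laplace_deriv (by simpa using h.lt_line), mul_comm]
  have hint : Integrable fun t : ℝ => Laplace f' (c + t * Complex.I) := by
    simpa [hderiv] using hdecay.integrableOn_smul h.line_neg.ne (h.laplaceConvergent hf) .univ
      (g := fun t : ℝ => (c + t * Complex.I : ℂ)) (K := 1) (by fun_prop) fun t _ => by simp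
  rw [← integral_laplace_mul_cexp hf.continuous_deriv (fun x => hf.toCausalC1.deriv_eq_zero)
    (fun x hx => (hC x hx).2) h.lt_line hint]
  simp only [hderiv, mul_assoc]
  exact h.apply_contourVec hf hdecay (φ := fun w => w * Complex.exp (w * x))
    (V := (BoundedContinuousFunction.evalCLM ℂ x).comp ((ContinuousLinearMap.snd ℂ _ _).comp
      (ContinuousLinearMap.fst ℂ _ _))) (by fun_prop) fun w hw => by
        simp [kernelVec, BoundedContinuousFunction.evalCLM, expBCF_apply hw.le, max_eq_left hx]

end IsDetour

/-! ### Density -/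

section Density

variable {β α r α₁ r₁ b c : ℝ} {f f' : ℝ → ℂ} {F : ℂ → ℂ}

theorem MemVRectExtended.memVRect (h : MemVRectExtended α r α₁ r₁ b f f' F) :
    MemVRect α r f f' F where
  toHasVanishingDeriv := h.toCausalC1.hasVanishingDeriv h.tendsto_deriv
  differentiableOn := h.differentiableOn.mono fun _ hs =>
    ⟨h.left_lt.trans hs.1, hs.2.1, hs.2.2.trans h.lt_height⟩
  continuousOn := h.continuousOn
  eq_laplace _ hs hre := h.eq_laplace _ (h.rate_neg.trans hre) hs.2.1 (hs.2.2.trans_lt h.lt_height)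

theorem MemVRectExtended.exists_isDetour (h : MemVRectExtended α r α₁ r₁ b f f' F) (hr : 0 < r)
    (hαc : α ≤ c) (hbc : b < c) (hc : c < 0) : ∃ A ρ, IsDetour α r α₁ r₁ b A c ρ := by
  obtain ⟨A, hA, hAα⟩ := exists_between h.left_lt
  obtain ⟨ρ, hρ, hρ₁⟩ := exists_between h.lt_height
  exact ⟨A, ρ, hr, hA, hAα, hAα.trans_le hαc, hbc, hc, hρ, hρ₁⟩

theorem MemVRectExtended.vBetaApproximable_of_verticalDecay
    (h : MemVRectExtended α r α₁ r₁ b f f' F) (hdecay : VerticalDecay 3 c f) (hβα : β < α)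
    (hr : 0 < r) (hαc : α ≤ c) (hbc : b < c) (hc : c < 0) : VBetaApproximable β α r f' F := by
  obtain ⟨A, ρ, hdetour⟩ := h.exists_isDetour hr hαc hbc hc
  have hα : α < 0 := hαc.trans_lt hc
  have hpi : (2 * Real.pi : ℂ) ≠ 0 := by exact_mod_cast Real.two_pi_pos.ne'
  refine vBetaApproximable_of_mem_kernelSpan (b := (2 * Real.pi : ℂ)⁻¹ • contourVec α r f F A c ρ)
    hβα hα hr (Submodule.smul_mem _ _ (hdetour.contourVec_mem_kernelSpan h hdecay hβα hα))
    h.memVRect (fun x hx => ?_) fun x hx => ?_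
  · rw [Prod.smul_fst, Prod.smul_fst, BoundedContinuousFunction.smul_apply,
      hdetour.contourVec_fst_fst_apply h hdecay hx, smul_eq_mul, inv_mul_cancel_left₀ hpi]
  · rw [Prod.smul_fst, Prod.smul_snd, BoundedContinuousFunction.smul_apply,
      hdetour.contourVec_fst_snd_apply h hdecay hx, smul_eq_mul, inv_mul_cancel_left₀ hpi]

theorem MemVRectExtended.vBetaApproximable (h : MemVRectExtended α r α₁ r₁ b f f' F)
    (hβα : β < α) (hα : α < 0) (hr : 0 < r) : VBetaApproximable β α r f' F := by
  obtain ⟨c, hmax, hc⟩ := exists_between (max_lt hα h.rate_neg)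
  obtain ⟨hαc, hbc⟩ := max_lt_iff.1 hmax
  refine .of_forall_exists_near fun ε hε => ?_
  obtain ⟨g, g', G, hg, hgdecay, hg'f', hGF⟩ :=
    h.exists_verticalDecay_succ_near hbc (h.verticalDecay_one hbc) hε
  refine ⟨g', G, .of_forall_exists_near fun δ hδ => ?_, fun x _ => hg'f' x, hGF⟩
  obtain ⟨k, k', K, hk, hkdecay, hk'g', hKG⟩ := hg.exists_verticalDecay_succ_near hbc hgdecay hδ
  exact ⟨k', K, hk.vBetaApproximable_of_verticalDecay hkdecay hβα hr hαc.le hbc hc,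
    fun x _ => hk'g' x, hKG⟩

theorem MemVRect.max_zero (h : MemVRect α r f f' F)
    (hcausal : CausalC1 (fun x => f (max x 0)) (fun x => f' (max x 0))) :
    MemVRect α r (fun x => f (max x 0)) (fun x => f' (max x 0)) F where
  toHasVanishingDeriv := hcausal.hasVanishingDeriv <| h.tendsto_deriv.congr' <| by
    filter_upwards [eventually_ge_atTop 0] with x hx
    rw [max_eq_left hx]
  differentiableOn := h.differentiableOn
  continuousOn := h.continuousOn
  eq_laplace s hs hre := by
    rw [h.eq_laplace s hs hre]
    exact laplace_congr fun x hx => by rw [max_eq_left hx.le]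

theorem MemVRect.vBetaApproximable_of_causalC1 (h : MemVRect α r f f' F)
    (hcausal : CausalC1 f f') (hβα : β < α) (hα : α < 0) (hr : 0 < r) :
    VBetaApproximable β α r f' F := by
  refine .of_forall_exists_near fun ε hε => ?_
  obtain ⟨α₁, r₁, b, g, g', G, hg, hf'g', hFG⟩ :=
    h.exists_memVRectExtended_near hcausal hα hr hε
  exact ⟨g', G, hg.vBetaApproximable hβα hα hr, hf'g', hFG⟩

theorem MemVRect.vBetaApproximable (h : MemVRect α r f f' F) (hβα : β < α) (hα : α < 0)
    (hr : 0 < r) : VBetaApproximable β α r f' F := by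
  obtain ⟨σ, σ', G, hσ, hσ0, hσ'0⟩ :=
    MemVHalfPlane.exists_eq_at_zero (hβα.trans hα) (f 0) (f' 0)
  have hdiff := h.sub (hσ.memVRect hβα)
  have hcausal := hdiff.causalC1_max_zero (by rw [hσ0, sub_self]) (by rw [hσ'0, sub_self])
  refine .of_sub (.congr ((hdiff.max_zero hcausal).vBetaApproximable_of_causalC1 hcausal hβα hα hr)
    fun x hx => ?_) hσ
  rw [max_eq_left hx]

end Density

/-- `V_β` is dense in `V_{α,r}` for `β < α < 0` and `r > 0`: every `τ ∈ V_{α,r}`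
(with extension `F`) can be approximated in `‖·‖_{α,r}` by `σ ∈ V_β` whose
Laplace transform extends analytically to the half-plane `Re s > β`. -/
theorem Vbeta_dense_in_Valphar
    (β α r : ℝ) (hβ : β < α) (hα : α < 0) (hr : 0 < r)
    (τ τ' : ℝ → ℂ) (F : ℂ → ℂ)
    (hder : ∀ x ∈ Set.Ici (0 : ℝ), HasDerivWithinAt τ (τ' x) (Set.Ici 0) x)
    (hcont : ContinuousOn τ' (Set.Ici 0))
    (hto0 : Tendsto τ' atTop (nhds 0))
    (hFan : DifferentiableOn ℂ F (Ropen α r))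
    (hFcont : ContinuousOn F (Rbar α r))
    (hFeq : ∀ s ∈ Rbar α r, 0 < s.re → F s = Laplace τ s)
    (ε : ℝ) (hε : 0 < ε) :
    ∃ (σ σ' : ℝ → ℂ) (G : ℂ → ℂ),
      (∀ x ∈ Set.Ici (0 : ℝ), HasDerivWithinAt σ (σ' x) (Set.Ici 0) x) ∧
      ContinuousOn σ' (Set.Ici 0) ∧
      Tendsto σ' atTop (nhds 0) ∧
      DifferentiableOn ℂ G {s : ℂ | β < s.re} ∧
      (∀ s : ℂ, 0 < s.re → G s = Laplace σ s) ∧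
      ∃ ε₁ ε₂ : ℝ, 0 ≤ ε₁ ∧ 0 ≤ ε₂ ∧ ε₁ + ε₂ < ε ∧
        (∀ x : ℝ, 0 ≤ x → ‖τ' x - σ' x‖ ≤ ε₁) ∧
        (∀ s ∈ Rbar α r, ‖F s - G s‖ ≤ ε₂) := by
  have hτ : MemVRect α r τ τ' F :=
    { hasDerivWithinAt := hder, continuousOn_deriv := hcont, tendsto_deriv := hto0
      differentiableOn := hFan, continuousOn := hFcont, eq_laplace := hFeq }
  obtain ⟨σ, σ', G, hσ, hτσ, hFG⟩ := hτ.vBetaApproximable hβ hα hr (ε / 3) (by positivity)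
  exact ⟨σ, σ', G, hσ.hasDerivWithinAt, hσ.continuousOn_deriv, hσ.tendsto_deriv,
    hσ.differentiableOn, hσ.eq_laplace, ε / 3, ε / 3, by positivity, by positivity,
    by linarith, hτσ, hFG⟩
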